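/- arXiv:2409.09270 — 2 statements merged into one kernel-verified Lean document; each statement's English description precedes it below -/
import Mathlib

section
/- (Uniform-norm error for nonlocal problems with symmetric polygonal interaction neighborhoods.) Let Ω ⊂ ℝ² be bounded and open, let δ₀ ∈ (0,1], μ ∈ {0,1}, and A, B, M > 0. Then there is a constant C > 0, depending only on Ω, δ₀, A, B, M, with the following property. Let δ ∈ (0,δ₀] and r ∈ [δ/2, δ], let γ̃ satisfy the radial kernel conditions with horizon δ in dimension 2 and ∫_{B_δ(0)} γ̃(|z|) dz < ∞, and set D := ∫_{r ≤ |z| ≤ δ} |z|² γ̃(|z|) dz; assume D ≤ 1/2. Let k : Ω̂_δ × Ω̂_δ → [0,∞) be measurable such that for every x ∈ Ω there is a measurable, symmetric weight m_x : ℝ² → [0,1] (m_x(−z) = m_x(z)) with m_x(z) = 1 for |z| ≤ r, m_x(z) = 0 for |z| ≥ δ, and k(x, x+z) = γ̃(|z|) m_x(z) for almost every z. Let u₀ : ℝ² → ℝ be four times continuously differentiable on an open neighborhood of the closure of Ω̂_δ with ‖D^j u₀(y)‖ ≤ M for all y ∈ Ω̂_δ and j = 0,…,4, and set f₀ = −Δu₀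 on Ω. Let f_δ : Ω → ℝ satisfy sup_Ω |f_δ − f₀| ≤ A δ², let g_δ : Ω_δ^c → ℝ satisfy sup_{Ω_δ^c} |g_δ − u₀| ≤ B δ^{2+μ}, and let u : Ω̂_δ → ℝ be bounded and measurable with −2∫_{Ω̂_δ} (u(y) − u(x)) k(x,y) dy = f_δ(x) for every x ∈ Ω and u = g_δ on Ω_δ^c. Then sup_{x∈Ω} |u(x) − u₀(x)| ≤ C (δ² + D). -/
open MeasureTheory Metric Set

noncomputable section

/-- Surface measure of the unit sphere in `ℝ^d`, expressed as `d` times the volume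
of the unit ball. -/
def unitSphereArea (d : ℕ) : ℝ :=
  d * (volume (ball (0 : EuclideanSpace ℝ (Fin d)) 1)).toReal

/-- The radial kernel conditions with horizon `δ` in dimension `d`. -/
def RadialKernel (d : ℕ) (δ : ℝ) (γ : ℝ → ℝ) : Prop :=
  Measurable γ ∧ (∀ s, 0 < s → s < δ → 0 < γ s) ∧ (∀ s, δ ≤ s → γ s = 0) ∧
    IntegrableOn γ (Ioo 0 δ) ∧
    unitSphereArea d * (∫ s in Ioo 0 δ, s ^ (d + 1) * γ s) = d

/-- The part of the complement of `Ω` within distance `δ` of the boundary. -/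
def omegaC {d : ℕ} (Ω : Set (EuclideanSpace ℝ (Fin d))) (δ : ℝ) :
    Set (EuclideanSpace ℝ (Fin d)) :=
  {y | y ∉ Ω ∧ infDist y (frontier Ω) < δ}

/-- `Ω̂_δ = Ω ∪ Ω_δ^c`. -/
def hatΩ {d : ℕ} (Ω : Set (EuclideanSpace ℝ (Fin d))) (δ : ℝ) :
    Set (EuclideanSpace ℝ (Fin d)) :=
  Ω ∪ omegaC Ω δ

/-- The Laplacian of `u : ℝ^d → ℝ`, as the trace of the second derivative. -/
def lap (d : ℕ) (u : EuclideanSpace ℝ (Fin d) → ℝ) (x : EuclideanSpace ℝ (Fin d)) : ℝ :=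
  ∑ i : Fin d, iteratedFDeriv ℝ 2 u x ![EuclideanSpace.single i 1, EuclideanSpace.single i 1]

lemma taylor1 (g0 g1 g2 g3 g4 : ℝ → ℝ) (K : ℝ)
    (h0 : ∀ t ∈ Icc (-1:ℝ) 1, HasDerivAt g0 (g1 t) t)
    (h1 : ∀ t ∈ Icc (-1:ℝ) 1, HasDerivAt g1 (g2 t) t)
    (h2 : ∀ t ∈ Icc (-1:ℝ) 1, HasDerivAt g2 (g3 t) t)
    (h3 : ∀ t ∈ Icc (-1:ℝ) 1, HasDerivAt g3 (g4 t) t)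
    (h4 : ∀ t ∈ Icc (-1:ℝ) 1, |g4 t| ≤ K) :
    |g0 1 + g0 (-1) - 2 * g0 0 - g2 0| ≤ 2 * K := by
  have z : (0:ℝ) ∈ Icc (-1:ℝ) 1 := by simp
  have key : ∀ (h h' : ℝ → ℝ), (∀ t ∈ Icc (-1:ℝ) 1, HasDerivAt h (h' t) t) →
      (∀ t ∈ Icc (-1:ℝ) 1, |h' t| ≤ K) → h 0 = 0 → ∀ t ∈ Icc (-1:ℝ) 1, |h t| ≤ K := by
    intro h h' hd hb hz t ht
    have := Convex.norm_image_sub_le_of_norm_hasDerivWithin_le (C := K) (f := h) (f' := h')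
      (fun s hs => (hd s hs).hasDerivWithinAt) hb (convex_Icc _ _) z ht
    rw [hz, sub_zero, sub_zero] at this
    have hK : 0 ≤ K := (abs_nonneg _).trans (hb 0 z)
    have h1 : |t| ≤ 1 := abs_le.2 ht
    calc |h t| ≤ K * |t| := this
      _ ≤ K * 1 := by gcongr
      _ = K := mul_one K
  have k3 := key (fun t => g3 t - g3 0) g4 (fun t ht => (h3 t ht).sub_const _) h4 (by simp)
  have k2 := key (fun t => g2 t - g2 0 - t * g3 0) (fun t => g3 t - g3 0) (fun t ht => by
    have := ((h2 t ht).sub_const (g2 0)).fun_sub ((hasDerivAt_id' t).mul_const (g3 0))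
    rwa [one_mul] at this) k3 (by simp)
  have k1 := key (fun t => g1 t - g1 0 - t * g2 0 - t ^ 2 / 2 * g3 0)
    (fun t => g2 t - g2 0 - t * g3 0) (fun t ht => by
    have := (((h1 t ht).sub_const (g1 0)).fun_sub ((hasDerivAt_id' t).mul_const (g2 0))).fun_sub
      (((hasDerivAt_pow 2 t).div_const 2).mul_const (g3 0))
    refine this.congr_deriv ?_
    norm_num) k2 (by simp)
  have k0 := key (fun t => g0 t - g0 0 - t * g1 0 - t ^ 2 / 2 * g2 0 - t ^ 3 / 6 * g3 0)
    (fun t => g1 t - g1 0 - t * g2 0 - t ^ 2 / 2 * g3 0) (fun t ht => by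
    have := ((((h0 t ht).sub_const (g0 0)).fun_sub ((hasDerivAt_id' t).mul_const (g1 0))).fun_sub
      (((hasDerivAt_pow 2 t).div_const 2).mul_const (g2 0))).fun_sub
      (((hasDerivAt_pow 3 t).div_const 6).mul_const (g3 0))
    refine this.congr_deriv ?_
    push_cast; ring) k1 (by simp)
  have a := abs_le.1 (k0 1 (by simp))
  have b := abs_le.1 (k0 (-1) (by simp))
  norm_num at a b
  rw [abs_le]
  constructor <;> linarith

lemma taylor2 {E : Type*} [NormedAddCommGroup E] [NormedSpace ℝ E] (u : E → ℝ) (x z : E) (M : ℝ)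
    (hc : ∀ t ∈ Icc (-1:ℝ) 1, ContDiffAt ℝ 4 u (x + t • z))
    (hM : ∀ t ∈ Icc (-1:ℝ) 1, ‖iteratedFDeriv ℝ 4 u (x + t • z)‖ ≤ M) :
    |u (x + z) + u (x - z) - 2 * u x - iteratedFDeriv ℝ 2 u x (fun _ => z)| ≤ 2 * (M * ‖z‖ ^ 4) := by
  have hd : ∀ n : ℕ, n < 4 → ∀ t ∈ Icc (-1:ℝ) 1,
      HasDerivAt (fun t => iteratedFDeriv ℝ n u (x + t • z) (fun _ => z))
        (iteratedFDeriv ℝ (n+1) u (x + t • z) (fun _ => z)) t := by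
    intro n hn t ht
    have h1 : DifferentiableAt ℝ (iteratedFDeriv ℝ n u) (x + t • z) :=
      (hc t ht).differentiableAt_iteratedFDeriv (by exact_mod_cast hn)
    have h2 : HasDerivAt (fun t : ℝ => x + t • z) z t := by
      simpa using ((hasDerivAt_id t).smul_const z).const_add x
    have h3 := h1.hasFDerivAt.comp_hasDerivAt t h2
    have h4 := ((ContinuousMultilinearMap.apply ℝ (fun _ : Fin n => E) ℝ (fun _ => z)).hasFDerivAt).comp_hasDerivAt t h3
    exact h4
  have := taylor1 _ _ _ _ _ (M * ‖z‖ ^ 4) (hd 0 (by norm_num)) (hd 1 (by norm_num)) (hd 2 (by norm_num))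
    (hd 3 (by norm_num)) (fun t ht => by
      have := (iteratedFDeriv ℝ 4 u (x + t • z)).le_opNorm (fun _ => z)
      simp only [Finset.prod_const, Finset.card_univ, Fintype.card_fin] at this
      exact this.trans (by gcongr; exact hM t ht))
  simpa [sub_eq_add_neg] using this

lemma ball_sub_hat {E : Type*} [NormedAddCommGroup E] [NormedSpace ℝ E] (Ω : Set E) (x y : E) (δ : ℝ)
    (ho : IsOpen Ω) (hx : x ∈ Ω) (hy : y ∉ Ω) (hd : dist y x < δ) : infDist y (frontier Ω) < δ := by
  obtain ⟨p, hp, hpf⟩ : (segment ℝ x y ∩ frontier Ω).Nonempty := by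
    by_contra hne
    have hcl : ∀ p ∈ segment ℝ x y, p ∈ closure Ω → p ∈ Ω := fun p hp hc => by
      by_contra hn
      exact hne ⟨p, hp, by rw [frontier, ho.interior_eq]; exact ⟨hc, hn⟩⟩
    obtain ⟨p, -, hp1, hp2⟩ := (convex_segment (𝕜 := ℝ) x y).isPreconnected Ω (closure Ω)ᶜ ho
      isClosed_closure.isOpen_compl
      (fun p hp => by
        by_cases h : p ∈ closure Ω
        · exact Or.inl (hcl p hp h)
        · exact Or.inr h)
      ⟨x, left_mem_segment ℝ x y, hx⟩
      ⟨y, right_mem_segment ℝ x y, fun h => hy (hcl y (right_mem_segment ℝ x y) h)⟩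
    exact hp2 (subset_closure hp1)
  refine (infDist_le_dist_of_mem hpf).trans_lt (lt_of_le_of_lt ?_ hd)
  have := dist_add_dist_of_mem_segment hp
  rw [dist_comm y p, dist_comm y x]
  linarith [dist_nonneg (x := x) (y := p)]

lemma maxP {E : Type*} [NormedAddCommGroup E] [MeasurableSpace E] [BorelSpace E] {ν : Measure E}
    (Ω : Set E) (φ : E → ℝ) (hφ : Measurable φ) (N : ℝ) (hN : ∀ x, |φ x| ≤ N) (b c K : ℝ)
    (hb : ∀ x ∉ Ω, φ x ≤ b) (hc : 0 < c) (hK : 0 < K)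
    (h : ∀ x ∈ Ω, ∃ w : E → ℝ, Integrable w ν ∧ (∀ᵐ z ∂ν, 0 ≤ w z) ∧ ∫ z, w z ∂ν ≤ K ∧
      c ≤ ∫ z, (φ (x + z) - φ x) * w z ∂ν) (x : E) : φ x ≤ b := by
  have hbd : BddAbove (range φ) := ⟨N, by rintro _ ⟨y, rfl⟩; exact (abs_le.1 (hN y)).2⟩
  set S := sSup (range φ) with hS
  have hle : ∀ y, φ y ≤ S := fun y => le_csSup hbd ⟨y, rfl⟩
  by_contra! hcon
  have hSb : b < S := hcon.trans_le (hle x)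
  have : S ≤ max b (S - c / K) := by
    apply csSup_le (range_nonempty φ)
    rintro _ ⟨y, rfl⟩
    by_cases hy : y ∈ Ω
    · apply le_max_of_le_right
      obtain ⟨w, hw, hw0, hwK, hcw⟩ := h y hy
      have h1 : ∫ z, (φ (y + z) - φ y) * w z ∂ν ≤ ∫ z, (S - φ y) * w z ∂ν := by
        apply integral_mono_ae
        · apply hw.bdd_mul (c := N + N)
          · exact ((hφ.comp (measurable_const_add y)).sub_const _).aestronglyMeasurable
          · refine Filter.Eventually.of_forall fun z => ?_
            exact (norm_sub_le _ _).trans (add_le_add (hN _) (hN _))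
        · exact hw.const_mul _
        · filter_upwards [hw0] with z hz
          exact mul_le_mul_of_nonneg_right (by linarith [hle (y + z)]) hz
      rw [integral_const_mul] at h1
      have h2 : (S - φ y) * ∫ z, w z ∂ν ≤ (S - φ y) * K :=
        mul_le_mul_of_nonneg_left hwK (by linarith [hle y])
      have h3 : c / K ≤ S - φ y := by rw [div_le_iff₀ hK]; linarith
      linarith
    · exact le_max_of_le_left (hb y hy)
  have : 0 < c / K := by positivity
  rcases le_max_iff.1 ‹S ≤ _› with h | h <;> linarith

abbrev E2 := EuclideanSpace ℝ (Fin 2)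

def Jl : E2 →ₗᵢ[ℝ] E2 where
  toFun z := !₂[- z 1, z 0]
  map_add' x y := by ext i; fin_cases i <;> simp; ring
  map_smul' c x := by ext i; fin_cases i <;> simp
  norm_map' x := by simp [EuclideanSpace.norm_eq, add_comm]

def JJ : E2 ≃ₗᵢ[ℝ] E2 := Jl.toLinearIsometryEquiv rfl

lemma JJ_apply (z : E2) : JJ z = !₂[- z 1, z 0] := rfl

lemma consist (δ r D K P τ : ℝ) (G m φ Q : E2 → ℝ) (x : E2) (hP : 0 ≤ P) (hK : 0 ≤ K)
    (hG : Integrable G) (hG0 : ∀ᵐ z, 0 ≤ G z) (hGδ : ∀ z, δ ≤ ‖z‖ → G z = 0)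
    (hGr : ∀ z y, ‖z‖ = ‖y‖ → G z = G y) (hG2 : ∫ z, ‖z‖ ^ 2 * G z = 2)
    (hm : Measurable m) (hm1 : ∀ z, m z ∈ Icc (0:ℝ) 1) (hme : ∀ z, m (-z) = m z)
    (hmr : ∀ z, ‖z‖ ≤ r → m z = 1)
    (hD : D = ∫ z in {z : E2 | r ≤ ‖z‖ ∧ ‖z‖ ≤ δ}, ‖z‖ ^ 2 * G z)
    (hφ : Measurable φ) (N : ℝ) (hN : ∀ x, |φ x| ≤ N)
    (hQm : Measurable Q) (hQJ : ∀ z, Q z + Q (JJ z) = τ * ‖z‖ ^ 2) (hQb : ∀ z, |Q z| ≤ P * ‖z‖ ^ 2)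
    (hT : ∀ z, ‖z‖ < δ → |φ (x + z) + φ (x - z) - 2 * φ x - Q z| ≤ K * ‖z‖ ^ 2) :
    |2 * (∫ z, (φ (x + z) - φ x) * (G z * m z)) - τ| ≤ 2 * K + P * D := by
  have hGm : Integrable (fun z => G z * m z) :=
    hG.mul_bdd (c := 1) hm.aestronglyMeasurable (Filter.Eventually.of_forall fun z => by
      rw [Real.norm_eq_abs, abs_of_nonneg (hm1 z).1]; exact (hm1 z).2)
  have hbdd : ∀ F : E2 → ℝ, Measurable F → (∀ z, |F z| ≤ N) → ∀ w : E2 → ℝ, Integrable w →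
      Integrable (fun z => F z * w z) := fun F hF hb w hw =>
    hw.bdd_mul (c := N) hF.aestronglyMeasurable (Filter.Eventually.of_forall hb)
  have hI2 : Integrable (fun z : E2 => ‖z‖ ^ 2 * G z) := by
    by_contra hh
    rw [integral_undef hh] at hG2
    norm_num at hG2
  have hQG : Integrable (fun z => Q z * G z) := by
    refine (hI2.const_mul P).mono' (hQm.aestronglyMeasurable.mul hG.aestronglyMeasurable) ?_
    filter_upwards [hG0] with z hz
    rw [norm_mul, Real.norm_eq_abs, Real.norm_eq_abs, abs_of_nonneg hz, ← mul_assoc]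
    exact mul_le_mul_of_nonneg_right (hQb z) hz
  have hQGm : Integrable (fun z => Q z * G z * m z) :=
    hQG.mul_bdd (c := 1) hm.aestronglyMeasurable (Filter.Eventually.of_forall fun z => by
      rw [Real.norm_eq_abs, abs_of_nonneg (hm1 z).1]; exact (hm1 z).2)
  -- integral of Q
  have e1 : ∫ z, Q z * G z = τ := by
    have hmp : MeasurePreserving (JJ : E2 → E2) volume volume := JJ.measurePreserving
    have a : ∫ z, Q (JJ z) * G (JJ z) = ∫ z, Q z * G z :=
      hmp.integral_comp JJ.toHomeomorph.measurableEmbedding (fun z => Q z * G z)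
    have a' : Integrable (fun z => Q (JJ z) * G (JJ z)) :=
      (hmp.integrable_comp_emb JJ.toHomeomorph.measurableEmbedding (g := fun z => Q z * G z)).2 hQG
    have b : ∫ z, (Q z * G z + Q (JJ z) * G (JJ z)) = τ * 2 := by
      rw [← hG2, ← integral_const_mul]
      congr 1; ext z
      rw [hGr (JJ z) z (JJ.norm_map z), ← add_mul, hQJ]; ring
    rw [integral_add hQG a', a] at b
    linarith
  -- symmetrisation
  have i1 : Integrable (fun z => φ (x + z) * (G z * m z)) :=
    hbdd _ (hφ.comp (measurable_const_add x)) (fun z => hN _) _ hGm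
  have i2 : Integrable (fun z => φ (x - z) * (G z * m z)) :=
    hbdd _ (hφ.comp (measurable_const_sub x)) (fun z => hN _) _ hGm
  have e2 : ∫ z, φ (x - z) * (G z * m z) = ∫ z, φ (x + z) * (G z * m z) := by
    rw [← integral_neg_eq_self]
    congr 1; ext z
    rw [hme, hGr (-z) z (norm_neg z), sub_neg_eq_add]
  have i3 : Integrable (fun z => φ x * (G z * m z)) := hGm.const_mul _
  have e3 : 2 * (∫ z, (φ (x + z) - φ x) * (G z * m z)) =
      ∫ z, (φ (x + z) + φ (x - z) - 2 * φ x) * (G z * m z) := by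
    have : ∫ z, (φ (x + z) + φ (x - z) - 2 * φ x) * (G z * m z) =
      ∫ z, (φ (x + z) * (G z * m z) + φ (x - z) * (G z * m z) - 2 * (φ x * (G z * m z))) := by
      congr 1; ext z; ring
    rw [this, integral_sub (by exact i1.add i2) (i3.const_mul 2), integral_add i1 i2, e2, integral_const_mul]
    have : ∫ z, (φ (x + z) - φ x) * (G z * m z) =
      ∫ z, (φ (x + z) * (G z * m z) - φ x * (G z * m z)) := by
      congr 1; ext z; ring
    rw [this, integral_sub i1 i3]; ring
  have i4 : Integrable (fun z => (φ (x + z) + φ (x - z) - 2 * φ x) * (G z * m z)) := by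
    have := (i1.add i2).sub (i3.const_mul 2)
    refine this.congr (Filter.Eventually.of_forall fun z => ?_)
    simp only [Pi.add_apply, Pi.sub_apply]; ring
  have b1 : |∫ z, ((φ (x + z) + φ (x - z) - 2 * φ x) * (G z * m z) - Q z * G z * m z)| ≤ 2 * K := by
    have : 2 * K = ∫ z : E2, K * (‖z‖ ^ 2 * G z) := by rw [integral_const_mul, hG2]; ring
    rw [this, ← Real.norm_eq_abs]
    refine norm_integral_le_of_norm_le (hI2.const_mul K) ?_
    filter_upwards [hG0] with z hz
    rcases lt_or_ge ‖z‖ δ with hlt | hge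
    · have : (φ (x + z) + φ (x - z) - 2 * φ x) * (G z * m z) - Q z * G z * m z =
        (φ (x + z) + φ (x - z) - 2 * φ x - Q z) * (G z * m z) := by ring
      rw [this, norm_mul, Real.norm_eq_abs, Real.norm_eq_abs, abs_of_nonneg (mul_nonneg hz (hm1 z).1),
        ← mul_assoc K]
      have h5 : G z * m z ≤ G z := mul_le_of_le_one_right hz (hm1 z).2
      exact mul_le_mul (hT z hlt) h5 (mul_nonneg hz (hm1 z).1) (by positivity)
    · simp [hGδ z hge]
  have b2 : |∫ z, (Q z * G z * m z - Q z * G z)| ≤ P * D := by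
    have hms : MeasurableSet {z : E2 | r ≤ ‖z‖ ∧ ‖z‖ ≤ δ} :=
      (measurableSet_le measurable_const measurable_norm).inter
        (measurableSet_le measurable_norm measurable_const)
    rw [hD, ← integral_const_mul, ← integral_indicator hms, ← Real.norm_eq_abs]
    refine norm_integral_le_of_norm_le ((hI2.const_mul P).indicator hms) ?_
    filter_upwards [hG0] with z hz
    by_cases h1 : ‖z‖ ≤ r
    · rw [hmr z h1]
      simp only [mul_one, sub_self, norm_zero]
      apply indicator_apply_nonneg
      intro _; positivity
    · by_cases h2 : ‖z‖ ≤ δ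
      · rw [indicator_of_mem (by exact ⟨(not_le.1 h1).le, h2⟩)]
        have : Q z * G z * m z - Q z * G z = - (Q z * (G z * (1 - m z))) := by ring
        have h6 : 0 ≤ 1 - m z := by linarith [(hm1 z).2]
        rw [this, norm_neg, norm_mul, Real.norm_eq_abs, Real.norm_eq_abs,
          abs_of_nonneg (mul_nonneg hz h6), ← mul_assoc P]
        exact mul_le_mul (hQb z) (mul_le_of_le_one_right hz (by linarith [(hm1 z).1]))
          (mul_nonneg hz h6) (by positivity)
      · rw [indicator_of_notMem (fun h => h2 h.2), hGδ z (not_le.1 h2).le]; simp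
  rw [integral_sub i4 hQGm] at b1
  rw [integral_sub hQGm hQG, e1] at b2
  rw [e3]
  rw [abs_le] at *
  constructor <;> linarith [b1.1, b1.2, b2.1, b2.2]


lemma rad_int (δ : ℝ) (hδ : 0 < δ) (γ : ℝ → ℝ) (h : RadialKernel 2 δ γ) :
    ∫ z : E2, ‖z‖ ^ 2 * γ ‖z‖ = 2 := by
  obtain ⟨-, -, h0, -, h2⟩ := h
  rw [integral_fun_norm_addHaar volume (fun s => s ^ 2 * γ s)]
  have hf : Module.finrank ℝ E2 = 2 := by simp
  rw [hf]
  have : ∫ y in Ioi (0:ℝ), y ^ (2 - 1) • (y ^ 2 * γ y) = ∫ s in Ioo 0 δ, s ^ (2 + 1) * γ s := by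
    rw [← integral_indicator measurableSet_Ioi, ← integral_indicator measurableSet_Ioo]
    congr 1; ext s
    by_cases hs : s ∈ Ioo 0 δ
    · rw [indicator_of_mem hs, indicator_of_mem (by exact hs.1)]
      simp only [smul_eq_mul]; ring
    · rw [indicator_of_notMem hs]
      by_cases hs0 : s ∈ Ioi 0
      · rw [indicator_of_mem hs0, h0 s (not_lt.1 fun h => hs ⟨hs0, h⟩)]; simp
      · rw [indicator_of_notMem hs0]
  rw [this]
  simp only [unitSphereArea, Nat.cast_ofNat] at h2
  rw [nsmul_eq_mul, smul_eq_mul, ← mul_assoc]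
  exact_mod_cast h2

lemma quadJ (L : E2 →L[ℝ] E2 →L[ℝ] ℝ) (z : E2) :
    L z z + L (JJ z) (JJ z) =
      (∑ i : Fin 2, L (EuclideanSpace.single i 1) (EuclideanSpace.single i 1)) * ‖z‖ ^ 2 := by
  have h1 : z = z 0 • EuclideanSpace.single 0 (1:ℝ) + z 1 • EuclideanSpace.single 1 (1:ℝ) := by
    ext i; fin_cases i <;> simp
  have h2 : JJ z = (-z 1) • EuclideanSpace.single 0 (1:ℝ) + z 0 • EuclideanSpace.single 1 (1:ℝ) := by
    rw [JJ_apply]; ext i; fin_cases i <;> simp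
  have h3 : ‖z‖ ^ 2 = z 0 ^ 2 + z 1 ^ 2 := by
    rw [EuclideanSpace.norm_sq_eq]; simp
  rw [h3, h2]
  generalize z 0 = a at *
  generalize z 1 = b at *
  rw [h1]
  simp only [map_add, map_smul, ContinuousLinearMap.add_apply, ContinuousLinearMap.smul_apply,
    smul_eq_mul, Fin.sum_univ_two]
  ring

lemma measurable_hat (Ω : Set E2) (ho : IsOpen Ω) (δ : ℝ) : MeasurableSet (hatΩ Ω δ) :=
  ho.measurableSet.union (ho.measurableSet.compl.inter
    (measurableSet_lt (continuous_infDist_pt _).measurable measurable_const))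

/-- uniform-norm error estimate for nonlocal problems with symmetric
polygonal interaction neighborhoods. -/
theorem stmt17 (Ω : Set (EuclideanSpace ℝ (Fin 2)))
    (hΩb : Bornology.IsBounded Ω) (hΩo : IsOpen Ω)
    (δ₀ : ℝ) (hδ₀ : δ₀ ∈ Ioc (0 : ℝ) 1) (μ : ℕ) (hμ : μ = 0 ∨ μ = 1)
    (A B M : ℝ) (hA : 0 < A) (hB : 0 < B) (hM : 0 < M) :
    ∃ C > 0, ∀ δ ∈ Ioc (0 : ℝ) δ₀, ∀ r ∈ Icc (δ / 2) δ,
      ∀ γ : ℝ → ℝ, RadialKernel 2 δ γ →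
      IntegrableOn (fun z : EuclideanSpace ℝ (Fin 2) => γ ‖z‖) (ball 0 δ) →
      ∀ D : ℝ,
        D = (∫ z in {z : EuclideanSpace ℝ (Fin 2) | r ≤ ‖z‖ ∧ ‖z‖ ≤ δ},
          ‖z‖ ^ 2 * γ ‖z‖) →
        D ≤ 1 / 2 →
      ∀ k : EuclideanSpace ℝ (Fin 2) → EuclideanSpace ℝ (Fin 2) → ℝ,
        Measurable (Function.uncurry k) →
        (∀ x ∈ hatΩ Ω δ, ∀ y ∈ hatΩ Ω δ, 0 ≤ k x y) →
        (∀ x ∈ Ω, ∃ m : EuclideanSpace ℝ (Fin 2) → ℝ, Measurable m ∧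
          (∀ z, m z ∈ Icc (0 : ℝ) 1) ∧ (∀ z, m (-z) = m z) ∧
          (∀ z, ‖z‖ ≤ r → m z = 1) ∧ (∀ z, δ ≤ ‖z‖ → m z = 0) ∧
          (∀ᵐ z ∂volume, k x (x + z) = γ ‖z‖ * m z)) →
      ∀ u₀ : EuclideanSpace ℝ (Fin 2) → ℝ,
        (∃ V, IsOpen V ∧ closure (hatΩ Ω δ) ⊆ V ∧ ContDiffOn ℝ 4 u₀ V) →
        (∀ y ∈ hatΩ Ω δ, ∀ j ≤ 4, ‖iteratedFDeriv ℝ j u₀ y‖ ≤ M) →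
      ∀ f : EuclideanSpace ℝ (Fin 2) → ℝ,
        (∀ x ∈ Ω, |f x - (-(lap 2 u₀ x))| ≤ A * δ ^ 2) →
      ∀ g : EuclideanSpace ℝ (Fin 2) → ℝ,
        (∀ x ∈ omegaC Ω δ, |g x - u₀ x| ≤ B * δ ^ (2 + μ)) →
      ∀ u : EuclideanSpace ℝ (Fin 2) → ℝ, Measurable u →
        (∃ Mu : ℝ, ∀ x ∈ hatΩ Ω δ, |u x| ≤ Mu) →
        (∀ x ∈ Ω, -(2 * ∫ y in hatΩ Ω δ, (u y - u x) * k x y) = f x) →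
        (∀ x ∈ omegaC Ω δ, u x = g x) →
      ∀ x ∈ Ω, |u x - u₀ x| ≤ C * (δ ^ 2 + D) := by
  obtain ⟨R0, hR0⟩ := hΩb.subset_closedBall 0
  set R := max R0 0 + 1 with hR
  have hR1 : 1 ≤ R := by rw [hR]; linarith [le_max_right R0 0]
  refine ⟨B + (A + 5 * M) * R ^ 2, by positivity, ?_⟩
  intro δ hδ r hr γ hγ hγi D hD hD2 k hk hk0 hkm u₀ hu₀ hM0 f hf g hg u hu hub hLu hug x₁ hx₁
  have hδ0 : 0 < δ := hδ.1
  have hδ1 : δ ≤ 1 := hδ.2.trans hδ₀.2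
  set H := hatΩ Ω δ with hH
  have hHm : MeasurableSet H := measurable_hat Ω hΩo δ
  have hΩH : Ω ⊆ H := subset_union_left
  have hball : ∀ x ∈ Ω, ∀ z : E2, ‖z‖ < δ → x + z ∈ H := by
    intro x hx z hz
    by_cases h : x + z ∈ Ω
    · exact Or.inl h
    · exact Or.inr ⟨h, ball_sub_hat Ω x _ δ hΩo hx h (by simpa [dist_eq_norm] using hz)⟩
  have hHR : ∀ y ∈ H, ‖y‖ ≤ R := by
    have hfne : (frontier Ω).Nonempty := by
      rw [nonempty_frontier_iff]
      refine ⟨⟨x₁, hx₁⟩, ?_⟩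
      rintro rfl
      exact NormedSpace.unbounded_univ ℝ E2 hΩb
    rintro y (hy | ⟨-, hy⟩)
    · have := hR0 hy
      rw [mem_closedBall_zero_iff] at this
      rw [hR]; linarith [le_max_left R0 0]
    · obtain ⟨p, hp, hyp⟩ := (infDist_lt_iff hfne).1 hy
      have := closure_minimal hR0 isClosed_closedBall (frontier_subset_closure hp)
      rw [mem_closedBall_zero_iff] at this
      have h3 : ‖y‖ ≤ ‖p‖ + ‖y - p‖ := by simpa using norm_add_le p (y - p)
      rw [dist_eq_norm] at hyp
      rw [hR]; linarith [le_max_left R0 0]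
  -- the kernel
  set G : E2 → ℝ := fun z => γ ‖z‖ with hGdef
  have hG2 : ∫ z, ‖z‖ ^ 2 * G z = 2 := rad_int δ hδ0 γ hγ
  obtain ⟨hγm, hγpos, hγz, -, -⟩ := hγ
  have hGδ : ∀ z, δ ≤ ‖z‖ → G z = 0 := fun z hz => hγz _ hz
  have hG : Integrable G := by
    refine (integrableOn_iff_integrable_of_support_subset ?_).1 hγi
    intro z hz
    rw [mem_ball_zero_iff]
    by_contra h
    exact hz (hGδ z (not_lt.1 h))
  have hGnn : ∀ z, z ≠ 0 → 0 ≤ G z := by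
    intro z hz
    rcases lt_or_ge ‖z‖ δ with h | h
    · exact (hγpos _ (norm_pos_iff.2 hz) h).le
    · exact (hGδ z h).ge
  have hG0 : ∀ᵐ z, 0 ≤ G z := by
    filter_upwards [(measure_eq_zero_iff_ae_notMem.1 (measure_singleton (μ := volume) (0 : E2)))]
      with z hz
    exact hGnn z hz
  have hGr : ∀ z y : E2, ‖z‖ = ‖y‖ → G z = G y := fun z y h => by simp only [hGdef, h]
  have hDnn : 0 ≤ D := by
    rw [hD]
    apply integral_nonneg
    intro z
    by_cases hz : z = 0
    · simp [hz]
    · exact mul_nonneg (by positivity) (hGnn z hz)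
  have hDG : D = ∫ z in {z : E2 | r ≤ ‖z‖ ∧ ‖z‖ ≤ δ}, ‖z‖ ^ 2 * G z := hD
  -- functions
  obtain ⟨Mu, hMu⟩ := hub
  obtain ⟨V, hVo, hHV, hu₀V⟩ := hu₀
  have hHV' : H ⊆ V := subset_closure.trans hHV
  set U : E2 → ℝ := H.indicator u with hUdef
  set U0 : E2 → ℝ := H.indicator u₀ with hU0def
  set W : E2 → ℝ := H.indicator (fun y => ‖y‖ ^ 2) with hWdef
  have hUm : Measurable U := hu.indicator hHm
  have hU0m : Measurable U0 := by
    classical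
    rw [hU0def, ← Set.piecewise_eq_indicator]
    exact (hu₀V.continuousOn.mono hHV').measurable_piecewise continuousOn_const hHm
  have hWm : Measurable W := (measurable_norm.pow_const 2).indicator hHm
  have hMu0 : 0 ≤ Mu := (abs_nonneg _).trans (hMu x₁ (hΩH hx₁))
  have bdI : ∀ (F : E2 → ℝ) (c : ℝ), 0 ≤ c → (∀ y ∈ H, |F y| ≤ c) → ∀ y, |H.indicator F y| ≤ c := by
    intro F c hc h y
    by_cases hy : y ∈ H
    · rw [indicator_of_mem hy]; exact h y hy
    · rw [indicator_of_notMem hy]; simpa using hc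
  have hUb : ∀ y, |U y| ≤ Mu := bdI _ _ hMu0 hMu
  have hU0b : ∀ y, |U0 y| ≤ M := bdI _ _ hM.le fun y hy => by
    simpa using hM0 y hy 0 (by norm_num)
  have hWb : ∀ y, |W y| ≤ R ^ 2 := bdI _ _ (by positivity) fun y hy => by
    rw [abs_of_nonneg (by positivity)]
    exact pow_le_pow_left₀ (norm_nonneg _) (hHR y hy) 2
  set T := (A + 5 * M) * (δ ^ 2 + D) with hT
  have hTpos : 0 < T := by positivity
  set K := ∫ z, G z with hKdef
  have hKnn : 0 ≤ K := integral_nonneg_of_ae hG0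
  -- main one-sided bound
  have main : ∀ σ : ℝ, |σ| = 1 → σ * (u x₁ - u₀ x₁) ≤ B * δ ^ 2 + T * R ^ 2 := by
    intro σ hσ
    have hmax := maxP (ν := volume) Ω (fun y => σ * (U y - U0 y) + T * W y)
      (((hUm.sub hU0m).const_mul σ).add (hWm.const_mul T)) (Mu + M + T * R ^ 2)
      (fun y => by
        refine (abs_add_le _ _).trans (add_le_add ?_ ?_)
        · rw [abs_mul, hσ, one_mul]
          exact (abs_sub _ _).trans (add_le_add (hUb y) (hU0b y))
        · rw [abs_mul, abs_of_pos hTpos]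
          exact mul_le_mul_of_nonneg_left (hWb y) hTpos.le)
      (B * δ ^ 2 + T * R ^ 2) T (K + 1)
      (fun y hy => by
        refine add_le_add ?_ (mul_le_mul_of_nonneg_left ((le_abs_self _).trans (hWb y)) hTpos.le)
        by_cases hyH : y ∈ H
        · have hyc : y ∈ omegaC Ω δ := hyH.resolve_left hy
          refine (le_abs_self _).trans ?_
          rw [abs_mul, hσ, one_mul, hUdef, hU0def, indicator_of_mem hyH, indicator_of_mem hyH,
            hug y hyc]
          refine (hg y hyc).trans (mul_le_mul_of_nonneg_left ?_ hB.le)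
          exact pow_le_pow_of_le_one hδ0.le hδ1 (by omega)
        · rw [hUdef, hU0def, indicator_of_notMem hyH, indicator_of_notMem hyH]
          simp only [sub_self, mul_zero]
          positivity) hTpos (by linarith)
      (fun x hx => by
        obtain ⟨m, hm, hm1, hme, hmr, hmδ, hkx⟩ := hkm x hx
        have hxH := hΩH hx
        have hGm : Integrable (fun z => G z * m z) :=
          hG.mul_bdd (c := 1) hm.aestronglyMeasurable (Filter.Eventually.of_forall fun z => by
            rw [Real.norm_eq_abs, abs_of_nonneg (hm1 z).1]; exact (hm1 z).2)
        have iF : ∀ (F : E2 → ℝ) (c : ℝ), Measurable F → (∀ y, |F y| ≤ c) →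
            Integrable (fun z => (F (x + z) - F x) * (G z * m z)) := by
          intro F c hF hb
          apply hGm.bdd_mul (c := c + c)
          · exact ((hF.comp (measurable_const_add x)).sub_const _).aestronglyMeasurable
          · exact Filter.Eventually.of_forall fun z =>
              (norm_sub_le _ _).trans (add_le_add (hb _) (hb _))
        refine ⟨fun z => G z * m z, hGm, ?_, ?_, ?_⟩
        · filter_upwards [hG0] with z hz using mul_nonneg hz (hm1 z).1
        · have : ∫ z, G z * m z ≤ K := by
            apply integral_mono_ae hGm hG
            filter_upwards [hG0] with z hz using mul_le_of_le_one_right hz (hm1 z).2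
          linarith
        -- equation for u
        have eU : ∫ y in H, (u y - u x) * k x y = ∫ z, (U (x + z) - U x) * (G z * m z) := by
          rw [← integral_indicator hHm, ← integral_add_left_eq_self _ x]
          apply integral_congr_ae
          filter_upwards [hkx] with z hz
          rcases lt_or_ge ‖z‖ δ with h | h
          · have hxz := hball x hx z h
            rw [indicator_of_mem hxz, hUdef, indicator_of_mem hxz, indicator_of_mem hxH, hz]
          · have hk0' : k x (x + z) = 0 := by rw [hz, hmδ z h, mul_zero]
            rw [hmδ z h, mul_zero, mul_zero]
            simp [indicator, hk0']
        have hLx := hLu x hx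
        rw [eU] at hLx
        -- consistency
        have cU0 := consist δ r D (2 * M * δ ^ 2) M (lap 2 u₀ x) G m U0
          (fun z => iteratedFDeriv ℝ 2 u₀ x (fun _ => z)) x hM.le (by positivity) hG hG0 hGδ hGr hG2
          hm hm1 hme hmr hDG hU0m M hU0b
          ((iteratedFDeriv ℝ 2 u₀ x).cont.comp (continuous_pi fun _ => continuous_id)).measurable
          (fun z => by
            simp only [lap, iteratedFDeriv_two_apply]
            exact quadJ _ z)
          (fun z => by
            have := (iteratedFDeriv ℝ 2 u₀ x).le_opNorm (fun _ => z)
            simp only [Finset.prod_const, Finset.card_univ, Fintype.card_fin] at this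
            exact this.trans (by gcongr; exact hM0 x hxH 2 (by norm_num)))
          (fun z hz => by
            have hseg : ∀ t ∈ Icc (-1:ℝ) 1, x + t • z ∈ H := fun t ht => by
              apply hball x hx
              rw [norm_smul]
              refine lt_of_le_of_lt (mul_le_of_le_one_left (norm_nonneg _) (abs_le.2 ht)) hz
            have h1 : x + z ∈ H := hball x hx z hz
            have h2 : x - z ∈ H := by
              rw [sub_eq_add_neg]; exact hball x hx (-z) (by rwa [norm_neg])
            rw [hU0def, indicator_of_mem h1, indicator_of_mem h2, indicator_of_mem hxH]
            refine (taylor2 u₀ x z M (fun t ht => hu₀V.contDiffAt (hVo.mem_nhds (hHV' (hseg t ht))))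
              (fun t ht => hM0 _ (hseg t ht) 4 le_rfl)).trans ?_
            have : ‖z‖ ^ 2 ≤ δ ^ 2 := pow_le_pow_left₀ (norm_nonneg _) hz.le 2
            calc 2 * (M * ‖z‖ ^ 4) = 2 * M * ‖z‖ ^ 2 * ‖z‖ ^ 2 := by ring
              _ ≤ 2 * M * δ ^ 2 * ‖z‖ ^ 2 := by gcongr)
        have cW := consist δ r D 0 2 4 G m W
          (fun z => 2 * ‖z‖ ^ 2) x (by norm_num) le_rfl hG hG0 hGδ hGr hG2
          hm hm1 hme hmr hDG hWm _ hWb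
          ((measurable_norm.pow_const 2).const_mul 2)
          (fun z => by simp only [JJ.norm_map]; ring)
          (fun z => by rw [abs_of_nonneg (by positivity)])
          (fun z hz => by
            have h1 : x + z ∈ H := hball x hx z hz
            have h2 : x - z ∈ H := by
              rw [sub_eq_add_neg]; exact hball x hx (-z) (by rwa [norm_neg])
            rw [hWdef, indicator_of_mem h1, indicator_of_mem h2, indicator_of_mem hxH]
            have := parallelogram_law_with_norm ℝ x z
            have h0 : ‖x + z‖ ^ 2 + ‖x - z‖ ^ 2 - 2 * ‖x‖ ^ 2 - 2 * ‖z‖ ^ 2 = 0 := by nlinarith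
            rw [h0]; simp)
        have hlin : ∫ z, ((σ * (U (x + z) - U0 (x + z)) + T * W (x + z)) -
            (σ * (U x - U0 x) + T * W x)) * (G z * m z) =
            σ * ((∫ z, (U (x + z) - U x) * (G z * m z)) - ∫ z, (U0 (x + z) - U0 x) * (G z * m z)) +
            T * ∫ z, (W (x + z) - W x) * (G z * m z) := by
          have iU := iF U _ hUm hUb
          have iU0 := iF U0 _ hU0m hU0b
          have iW := iF W _ hWm hWb
          rw [← integral_sub iU iU0, ← integral_const_mul, ← integral_const_mul,
            ← integral_add (by exact (iU.sub iU0).const_mul σ) (iW.const_mul T)]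
          congr 1; ext z; ring
        simp only []
        rw [hlin]
        generalize (∫ z, (U (x + z) - U x) * (G z * m z)) = a at *
        generalize (∫ z, (U0 (x + z) - U0 x) * (G z * m z)) = b at *
        generalize (∫ z, (W (x + z) - W x) * (G z * m z)) = c at *
        have hfx := hf x hx
        have h1 : |2 * (a - b)| ≤ T := by
          rw [abs_le] at hfx cU0 ⊢
          have e : T = A * δ ^ 2 + (2 * (2 * M * δ ^ 2) + M * D) + (M * δ ^ 2 + A * D + 4 * M * D) := by
            rw [hT]; ring
          have : 0 ≤ M * δ ^ 2 + A * D + 4 * M * D := by positivity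
          constructor <;> linarith [hfx.1, hfx.2, cU0.1, cU0.2]
        have h2 : |σ * (2 * (a - b))| ≤ T := by rw [abs_mul, hσ, one_mul]; exact h1
        have h3 : 3 ≤ 2 * c := by linarith [(abs_le.1 cW).1]
        have h4 : T * 3 ≤ T * (2 * c) := mul_le_mul_of_nonneg_left h3 hTpos.le
        linarith [(abs_le.1 h2).1]) x₁
    have hxH := hΩH hx₁
    have hW0 : 0 ≤ T * W x₁ := by
      rw [hWdef, indicator_of_mem hxH]; positivity
    simp only [hUdef, hU0def, indicator_of_mem hxH] at hmax
    linarith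
  have m1 := main 1 (by simp)
  have m2 := main (-1) (by simp)
  have hfin : B * δ ^ 2 + T * R ^ 2 ≤ (B + (A + 5 * M) * R ^ 2) * (δ ^ 2 + D) := by
    have : 0 ≤ B * D := by positivity
    rw [hT]; nlinarith
  rw [abs_le]
  constructor <;> linarith
end
end

section
/- (Energy-norm error for nonlocal problems with non-symmetric polygonal interaction neighborhoods.) Let Ω ⊂ ℝ² be bounded and open, let δ₀ ∈ (0,1], μ ∈ {0,1}, and A, B, M, R, K, K' > 0, and suppose x* ∈ ℝ² is such that Ω̂_{δ₀} is contained in the closed ball B̄_R(x*). Then there is a constant C > 0, depending only on Ω, δ₀, A, B, M, R, K, K', with the following property. Let δ ∈ (0,δ₀] and r ∈ [δ/2, δ], let γ̃ satisfy the radial kernel conditions with horizon δ in dimension 2 with ∫_{B_δ(0)} γ̃(|z|) dz ≤ K δ^{-2}, suppose the Lebesgue measure of Ω_δ^c satisfies |Ω_δ^c| ≤ K' δ, and set D := ∫_{r ≤ |z| ≤ δ} |z|² γ̃(|z|) dz; assume D ≤ 1/2 and 4R·D/r ≤ 1. Let k : Ω̂_δ × Ω̂_δ → [0,∞) be measurable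 and symmetric (k(x,y) = k(y,x)) such that for every x ∈ Ω there is a measurable weight m_x : ℝ² → [0,1] with m_x(z) = 1 for |z| ≤ r, m_x(z) = 0 for |z| ≥ δ, and k(x, x+z) = γ̃(|z|) m_x(z) for almost every z, and such that k(x,y) ≤ γ̃(|y−x|) for all x, y ∈ Ω̂_δ. Let u₀ : ℝ² → ℝ be four times continuously differentiable on an open neighborhood of the closure of Ω̂_δ with ‖D^j u₀(y)‖ ≤ M for all y ∈ Ω̂_δ and j = 0,…,4, and set f₀ = −Δu₀ on Ω. Let f_δ : Ω → ℝ satisfy sup_Ω |f_δ − f₀| ≤ A δ², let g_δ : Ω_δ^c → ℝ satisfy sup_{Ω_δ^c} |g_δ − u₀| ≤ B δ^{2+μ}, and let u : Ω̂_δ → ℝ be bounded and measurable with −2∫_{Ω̂_δ} (u(y) − u(x)) k(x,y) dy = f_δ(x) for every x ∈ Ω and u = g_δ on Ω_δ^c. Then ∫_{Ω̂_δ}∫_{Ω̂_δ} ((u−u₀)(y) − (u−u₀)(x))² k(x,y) dy dx ≤ C (δ^{1+μ} + δ^{-1} D)(δ² + δ^{-1} D). -/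
open MeasureTheory Metric Set

noncomputable section

local notation "E2" => EuclideanSpace ℝ (Fin 2)

lemma taylor1d (F0 F1 F2 F3 F4 : ℝ → ℝ) (C : ℝ)
    (h0 : ∀ t ∈ Icc (0:ℝ) 1, HasDerivAt F0 (F1 t) t)
    (h1 : ∀ t ∈ Icc (0:ℝ) 1, HasDerivAt F1 (F2 t) t)
    (h2 : ∀ t ∈ Icc (0:ℝ) 1, HasDerivAt F2 (F3 t) t)
    (h3 : ∀ t ∈ Icc (0:ℝ) 1, HasDerivAt F3 (F4 t) t)
    (h4 : ∀ t ∈ Icc (0:ℝ) 1, |F4 t| ≤ C) :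
    |F0 1 - F0 0 - F1 0 - F2 0 / 2 - F3 0 / 6| ≤ C := by
  have key : ∀ (G g : ℝ → ℝ), (∀ t ∈ Icc (0:ℝ) 1, HasDerivAt G (g t) t) →
      (∀ t ∈ Icc (0:ℝ) 1, |g t| ≤ C) → G 0 = 0 → ∀ t ∈ Icc (0:ℝ) 1, |G t| ≤ C := by
    intro G g hG hg hG0 t ht
    have := norm_image_sub_le_of_norm_deriv_le_segment' (f := G) (f' := g) (C := C) (a := 0) (b := 1)
      (fun x hx => (hG x hx).hasDerivWithinAt) (fun x hx => hg x ⟨hx.1, hx.2.le⟩) t ht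
    rw [hG0, sub_zero, sub_zero, Real.norm_eq_abs] at this
    have hC : 0 ≤ C := (abs_nonneg _).trans (hg t ht)
    nlinarith [ht.2]
  have k3 := key (fun t => F3 t - F3 0) F4 (fun t ht => (h3 t ht).sub_const _) h4 (by simp)
  have k2 := key (fun t => F2 t - F2 0 - t * F3 0) (fun t => F3 t - F3 0)
    (fun t ht => by
      have := ((h2 t ht).sub_const (F2 0)).sub ((hasDerivAt_id t).mul_const (F3 0))
      convert! this using 1
      simp) k3 (by simp)
  have k1 := key (fun t => F1 t - F1 0 - t * F2 0 - t ^ 2 * (F3 0 / 2))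
    (fun t => F2 t - F2 0 - t * F3 0)
    (fun t ht => by
      have := (((h1 t ht).sub_const (F1 0)).sub ((hasDerivAt_id t).mul_const (F2 0))).sub
        ((hasDerivAt_pow 2 t).mul_const (F3 0 / 2))
      convert! this using 1
      simp; ring) k2 (by simp)
  have k0 := key (fun t => F0 t - F0 0 - t * F1 0 - t ^ 2 * (F2 0 / 2) - t ^ 3 * (F3 0 / 6))
    (fun t => F1 t - F1 0 - t * F2 0 - t ^ 2 * (F3 0 / 2))
    (fun t ht => by
      have := ((((h0 t ht).sub_const (F0 0)).sub ((hasDerivAt_id t).mul_const (F1 0))).sub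
        ((hasDerivAt_pow 2 t).mul_const (F2 0 / 2))).sub ((hasDerivAt_pow 3 t).mul_const (F3 0 / 6))
      convert! this using 1
      simp; ring) k1 (by simp)
  simpa using k0 1 (by simp)

lemma hasDerivAt_line (u : E2 → ℝ) (V : Set E2) (hV : IsOpen V) (hu : ContDiffOn ℝ 4 u V)
    (x z : E2) (t : ℝ) (ht : x + t • z ∈ V) (j : ℕ) (hj : j < 4) :
    HasDerivAt (fun s : ℝ => iteratedFDeriv ℝ j u (x + s • z) (fun _ => z))
      (iteratedFDeriv ℝ (j+1) u (x + t • z) (fun _ => z)) t := by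
  have hc : ContDiffAt ℝ 4 u (x + t • z) := hu.contDiffAt (hV.mem_nhds ht)
  have hd : DifferentiableAt ℝ (iteratedFDeriv ℝ j u) (x + t • z) :=
    hc.differentiableAt_iteratedFDeriv (by exact_mod_cast hj)
  have hl : HasDerivAt (fun s : ℝ => x + s • z) z t := by
    simpa using ((hasDerivAt_id t).smul_const z).const_add x
  have h1 := hd.hasFDerivAt.comp_hasDerivAt t hl
  have h2 := ((ContinuousMultilinearMap.apply ℝ (fun _ : Fin j => E2) ℝ
    (fun _ => z)).hasFDerivAt).comp_hasDerivAt t h1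
  exact h2

lemma taylorE (u : E2 → ℝ) (V : Set E2) (hV : IsOpen V) (hu : ContDiffOn ℝ 4 u V)
    (x z : E2) (M : ℝ) (hs : ∀ t ∈ Icc (0:ℝ) 1, x + t • z ∈ V)
    (hb : ∀ t ∈ Icc (0:ℝ) 1, ‖iteratedFDeriv ℝ 4 u (x + t • z)‖ ≤ M) :
    |u (x + z) - u x - iteratedFDeriv ℝ 1 u x (fun _ => z)
      - iteratedFDeriv ℝ 2 u x (fun _ => z) / 2 - iteratedFDeriv ℝ 3 u x (fun _ => z) / 6|
      ≤ M * ‖z‖ ^ 4 := by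
  have := taylor1d (fun s : ℝ => iteratedFDeriv ℝ 0 u (x + s • z) (fun _ => z))
    (fun s : ℝ => iteratedFDeriv ℝ 1 u (x + s • z) (fun _ => z))
    (fun s : ℝ => iteratedFDeriv ℝ 2 u (x + s • z) (fun _ => z))
    (fun s : ℝ => iteratedFDeriv ℝ 3 u (x + s • z) (fun _ => z))
    (fun s : ℝ => iteratedFDeriv ℝ 4 u (x + s • z) (fun _ => z)) (M * ‖z‖ ^ 4)
    (fun t ht => hasDerivAt_line u V hV hu x z t (hs t ht) 0 (by norm_num))
    (fun t ht => hasDerivAt_line u V hV hu x z t (hs t ht) 1 (by norm_num))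
    (fun t ht => hasDerivAt_line u V hV hu x z t (hs t ht) 2 (by norm_num))
    (fun t ht => hasDerivAt_line u V hV hu x z t (hs t ht) 3 (by norm_num))
    (fun t ht => by
      have h := (iteratedFDeriv ℝ 4 u (x + t • z)).le_opNorm (fun _ => z)
      simp only [Finset.prod_const, Finset.card_univ, Fintype.card_fin, Real.norm_eq_abs] at h
      exact h.trans (mul_le_mul_of_nonneg_right (hb t ht) (by positivity)))
  simpa only [iteratedFDeriv_zero_apply, one_smul, zero_smul, add_zero] using this

lemma lipE (u : E2 → ℝ) (V : Set E2) (hV : IsOpen V) (hu : ContDiffOn ℝ 4 u V)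
    (x z : E2) (M : ℝ) (hs : ∀ t ∈ Icc (0:ℝ) 1, x + t • z ∈ V)
    (hb : ∀ t ∈ Icc (0:ℝ) 1, ‖iteratedFDeriv ℝ 1 u (x + t • z)‖ ≤ M) :
    |u (x + z) - u x| ≤ M * ‖z‖ := by
  have := norm_image_sub_le_of_norm_deriv_le_segment_01'
    (f := fun s : ℝ => iteratedFDeriv ℝ 0 u (x + s • z) (fun _ => z))
    (f' := fun s : ℝ => iteratedFDeriv ℝ 1 u (x + s • z) (fun _ => z)) (C := M * ‖z‖)
    (fun t ht => (hasDerivAt_line u V hV hu x z t (hs t ht) 0 (by norm_num)).hasDerivWithinAt)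
    (fun t ht => by
      have h := (iteratedFDeriv ℝ 1 u (x + t • z)).le_opNorm (fun _ => z)
      simp only [Finset.prod_const, Finset.card_univ, Fintype.card_fin, pow_one] at h
      exact h.trans (mul_le_mul_of_nonneg_right (hb t ⟨ht.1, ht.2.le⟩) (by positivity)))
  simpa only [Real.norm_eq_abs, iteratedFDeriv_zero_apply, one_smul, zero_smul, add_zero] using this

lemma ball_sub_hat_s19 (Ω : Set E2) (hΩo : IsOpen Ω) (δ : ℝ) (x : E2) (hx : x ∈ Ω) (z : E2) (hz : ‖z‖ < δ) :
    x + z ∈ hatΩ Ω δ := by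
  by_cases h : x + z ∈ Ω
  · exact Or.inl h
  · refine Or.inr ⟨h, ?_⟩
    have hp : IsPreconnected (segment ℝ x (x+z)) := (convex_segment _ _).isPreconnected
    obtain ⟨y, hy1, hy2⟩ : (segment ℝ x (x+z) ∩ frontier Ω).Nonempty := by
      by_contra hne
      have hn : ∀ y ∈ segment ℝ x (x+z), y ∉ frontier Ω := fun y h1 h2 => hne ⟨y, h1, h2⟩
      have hcl : ∀ y ∈ segment ℝ x (x+z), y ∉ Ω → y ∈ (closure Ω)ᶜ := by
        intro y hy hyΩ hcl
        apply hn y hy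
        rw [hΩo.frontier_eq]
        exact ⟨hcl, hyΩ⟩
      obtain ⟨y, hy, hy1, hy2⟩ := hp Ω (closure Ω)ᶜ hΩo isClosed_closure.isOpen_compl
        (fun y hy => by
          by_cases hyΩ : y ∈ Ω
          · exact Or.inl hyΩ
          · exact Or.inr (hcl y hy hyΩ))
        ⟨x, left_mem_segment _ _ _, hx⟩
        ⟨x + z, right_mem_segment _ _ _, hcl _ (right_mem_segment _ _ _) h⟩
      exact hy2 (subset_closure hy1)
    refine (infDist_le_dist_of_mem hy2).trans_lt ?_
    rw [segment_eq_image'] at hy1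
    obtain ⟨t, ht, rfl⟩ := hy1
    rw [dist_eq_norm]
    have : x + z - (x + t • (x + z - x)) = (1 - t) • z := by
      simp only [add_sub_cancel_left, sub_smul, one_smul]; abel
    rw [this, norm_smul, Real.norm_eq_abs, abs_of_nonneg (by linarith [ht.2])]
    nlinarith [ht.1, norm_nonneg z]

lemma intG (γ : ℝ → ℝ) (δ : ℝ) (h0 : ∀ s, δ ≤ s → γ s = 0)
    (hG : Integrable (fun z : E2 => γ ‖z‖)) (φ : E2 → ℝ) (hφ : Measurable φ) (c : ℝ)
    (hc : ∀ z, ‖z‖ < δ → |φ z| ≤ c) : Integrable (fun z => φ z * γ ‖z‖) := by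
  refine (hG.norm.const_mul c).mono' (hφ.aestronglyMeasurable.mul hG.1) (ae_of_all _ fun z => ?_)
  rw [norm_mul]
  by_cases hz : ‖z‖ < δ
  · exact mul_le_mul_of_nonneg_right (hc z hz) (norm_nonneg _)
  · simp [h0 _ (not_lt.1 hz)]

lemma integrableG (γ : ℝ → ℝ) (δ : ℝ) (h0 : ∀ s, δ ≤ s → γ s = 0)
    (hint : IntegrableOn (fun z : E2 => γ ‖z‖) (ball 0 δ)) :
    Integrable (fun z : E2 => γ ‖z‖) := by
  rw [← integrableOn_univ]
  refine hint.of_forall_sdiff_eq_zero MeasurableSet.univ fun z hz => ?_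
  apply h0
  simpa using hz.2

lemma moment2 (γ : ℝ → ℝ) (δ : ℝ) (hγ : RadialKernel 2 δ γ) :
    ∫ z : E2, ‖z‖ ^ 2 * γ ‖z‖ = 2 := by
  have h := integral_fun_norm_addHaar (volume : Measure E2) (fun s => s ^ 2 * γ s)
  rw [h]
  obtain ⟨_, _, h0, _, h2⟩ := hγ
  unfold unitSphereArea at h2
  have : ∫ y in Ioi (0:ℝ), y ^ (Module.finrank ℝ E2 - 1) • (y ^ 2 * γ y)
      = ∫ s in Ioo 0 δ, s ^ (2 + 1) * γ s := by
    have e : ∀ y : ℝ, y ^ (Module.finrank ℝ E2 - 1) • (y ^ 2 * γ y) = y ^ (2+1) * γ y := by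
      intro y; simp; ring
    simp_rw [e]
    refine setIntegral_eq_of_subset_of_forall_sdiff_eq_zero measurableSet_Ioi
      (fun x hx => hx.1) (fun x hx => ?_)
    have : δ ≤ x := by
      by_contra hlt
      exact hx.2 ⟨hx.1, not_le.1 hlt⟩
    rw [h0 x this, mul_zero]
  rw [this]
  simp only [nsmul_eq_mul, smul_eq_mul, Measure.real, finrank_euclideanSpace, Fintype.card_fin]
  rw [← mul_assoc]
  exact_mod_cast h2

lemma odd_zero (γ : ℝ → ℝ) (φ : E2 → ℝ) (hφ : ∀ z, φ (-z) = - φ z) :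
    ∫ z : E2, φ z * γ ‖z‖ = 0 := by
  have h := integral_neg_eq_self (fun z : E2 => φ z * γ ‖z‖) volume
  simp only [norm_neg, hφ, neg_mul, integral_neg] at h
  linarith

lemma moment01 (γ : ℝ → ℝ) : ∫ z : E2, z 0 * z 1 * γ ‖z‖ = 0 := by
  let T : E2 ≃ₗᵢ[ℝ] E2 := LinearIsometryEquiv.piLpCongrRight 2
    (fun i : Fin 2 => if i = 0 then LinearIsometryEquiv.neg ℝ else LinearIsometryEquiv.refl ℝ ℝ)
  have h := T.measurePreserving.integral_comp T.toHomeomorph.measurableEmbedding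
    (fun z : E2 => z 0 * z 1 * γ ‖z‖)
  have e0 : ∀ z : E2, T z 0 = - z 0 := fun z => by simp [T]
  have e1 : ∀ z : E2, T z 1 = z 1 := fun z => by simp [T]
  simp only [T.norm_map, e0, e1, neg_mul, integral_neg] at h
  linarith

lemma moment_swap (γ : ℝ → ℝ) : ∫ z : E2, z 0 ^ 2 * γ ‖z‖ = ∫ z : E2, z 1 ^ 2 * γ ‖z‖ := by
  let T : E2 ≃ₗᵢ[ℝ] E2 := LinearIsometryEquiv.piLpCongrLeft 2 ℝ ℝ (Equiv.swap 0 1)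
  have h := T.measurePreserving.integral_comp T.toHomeomorph.measurableEmbedding
    (fun z : E2 => z 0 ^ 2 * γ ‖z‖)
  have e0 : ∀ z : E2, T z 0 = z 1 := fun z => by
    simp [T, LinearIsometryEquiv.piLpCongrLeft_apply, Equiv.piCongrLeft']
  simp only [T.norm_map, e0] at h
  exact h.symm

lemma bil_expand (b : E2 [×2]→L[ℝ] ℝ) (z : E2) : b (fun _ => z) =
    z 0 ^ 2 * b ![EuclideanSpace.single 0 1, EuclideanSpace.single 0 1]
    + z 0 * z 1 * (b ![EuclideanSpace.single 0 1, EuclideanSpace.single 1 1]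
      + b ![EuclideanSpace.single 1 1, EuclideanSpace.single 0 1])
    + z 1 ^ 2 * b ![EuclideanSpace.single 1 1, EuclideanSpace.single 1 1] := by
  have hz : z = z 0 • EuclideanSpace.single 0 (1:ℝ) + z 1 • EuclideanSpace.single 1 (1:ℝ) := by
    ext i; fin_cases i <;> simp
  have a1 : ∀ p q r : E2, b ![p + q, r] = b ![p, r] + b ![q, r] :=
    fun p q r => b.toMultilinearMap.cons_add ![r] p q
  have s1 : ∀ (c : ℝ) (p r : E2), b ![c • p, r] = c * b ![p, r] :=
    fun c p r => b.toMultilinearMap.cons_smul ![r] c p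
  have upd : ∀ p q r : E2, Function.update ![p, q] 1 r = ![p, r] := by
    intro p q r; ext i; fin_cases i <;> simp
  have a2 : ∀ p q r : E2, b ![r, p + q] = b ![r, p] + b ![r, q] := fun p q r => by
    have := b.map_update_add ![r, p] 1 p q
    simpa only [upd] using this
  have s2 : ∀ (c : ℝ) (p r : E2), b ![r, c • p] = c * b ![r, p] := fun c p r => by
    have := b.map_update_smul ![r, p] 1 c p
    simpa only [upd, smul_eq_mul] using this
  have h1 : (fun _ : Fin 2 => z) = ![z, z] := by ext i; fin_cases i <;> rfl
  rw [h1]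
  conv_lhs => rw [hz]
  rw [a1, s1, s1, a2, a2, s2, s2, s2, s2]
  ring

lemma moment_bil (γ : ℝ → ℝ) (δ : ℝ) (hγ : RadialKernel 2 δ γ)
    (hG : Integrable (fun z : E2 => γ ‖z‖)) (b : E2 [×2]→L[ℝ] ℝ) :
    ∫ z : E2, b (fun _ => z) * γ ‖z‖ =
      ∑ i : Fin 2, b ![EuclideanSpace.single i 1, EuclideanSpace.single i 1] := by
  have hc : ∀ (i : Fin 2) (z : E2), |z i| ≤ ‖z‖ := fun i z => by
    simpa using PiLp.norm_apply_le z i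
  have hi : ∀ i j : Fin 2, Integrable (fun z : E2 => z i * z j * γ ‖z‖) := by
    intro i j
    refine intG γ δ hγ.2.2.1 hG _ (by fun_prop) (δ * δ) fun z hz => ?_
    rw [abs_mul]
    exact mul_le_mul ((hc i z).trans hz.le) ((hc j z).trans hz.le) (abs_nonneg _)
      ((norm_nonneg z).trans hz.le)
  have hsq : ∀ i : Fin 2, Integrable (fun z : E2 => z i ^ 2 * γ ‖z‖) := fun i => by
    simpa only [pow_two] using hi i i
  have hm := moment2 γ δ hγ
  have hn : ∀ z : E2, ‖z‖ ^ 2 * γ ‖z‖ = z 0 ^ 2 * γ ‖z‖ + z 1 ^ 2 * γ ‖z‖ := fun z => by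
    rw [EuclideanSpace.norm_sq_eq]; simp; ring
  simp_rw [hn] at hm
  rw [integral_add (hsq 0) (hsq 1), moment_swap] at hm
  have h1 : ∫ z : E2, z 1 ^ 2 * γ ‖z‖ = 1 := by linarith
  have h0 : ∫ z : E2, z 0 ^ 2 * γ ‖z‖ = 1 := by rw [moment_swap]; exact h1
  have e : ∀ z : E2, b (fun _ => z) * γ ‖z‖ =
      (z 0 ^ 2 * γ ‖z‖) * b ![EuclideanSpace.single 0 1, EuclideanSpace.single 0 1]
      + (z 0 * z 1 * γ ‖z‖) * (b ![EuclideanSpace.single 0 1, EuclideanSpace.single 1 1]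
      + b ![EuclideanSpace.single 1 1, EuclideanSpace.single 0 1])
      + (z 1 ^ 2 * γ ‖z‖) * b ![EuclideanSpace.single 1 1, EuclideanSpace.single 1 1] := fun z => by
    rw [bil_expand]; ring
  simp_rw [e]
  have hA := fun p q : ℝ => ((hsq 0).mul_const p).add ((hi 0 1).mul_const q)
  simp only [Pi.add_def] at hA
  rw [integral_add (hA _ _) ((hsq 1).mul_const _),
    integral_add ((hsq 0).mul_const _) ((hi 0 1).mul_const _), integral_mul_const,
    integral_mul_const, integral_mul_const, h0, h1, moment01]
  simp

lemma tail (γ : ℝ → ℝ) (δ r D : ℝ) (hγ0 : ∀ s, 0 ≤ s → 0 ≤ γ s) (h0 : ∀ s, δ ≤ s → γ s = 0)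
    (hG : Integrable (fun z : E2 => γ ‖z‖))
    (hD : D = (∫ z in {z : E2 | r ≤ ‖z‖ ∧ ‖z‖ ≤ δ}, ‖z‖ ^ 2 * γ ‖z‖))
    (m : E2 → ℝ) (hm : ∀ z, m z ∈ Icc (0 : ℝ) 1) (hm1 : ∀ z, ‖z‖ ≤ r → m z = 1)
    (φ : E2 → ℝ) (a : ℝ) (ha : 0 ≤ a)
    (hφ : ∀ z, r < ‖z‖ → ‖z‖ < δ → |φ z| ≤ a * ‖z‖ ^ 2) :
    |∫ z, φ z * γ ‖z‖ * (1 - m z)| ≤ a * D := by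
  have hS : MeasurableSet {z : E2 | r ≤ ‖z‖ ∧ ‖z‖ ≤ δ} :=
    (measurableSet_le measurable_const measurable_norm).inter
      (measurableSet_le measurable_norm measurable_const)
  have hi : Integrable (fun z : E2 => ‖z‖ ^ 2 * γ ‖z‖) :=
    intG γ δ h0 hG _ (by fun_prop) (δ ^ 2) fun z hz => by
      rw [abs_of_nonneg (by positivity)]; gcongr
  rw [hD, ← integral_indicator hS, ← integral_const_mul, ← Real.norm_eq_abs]
  refine norm_integral_le_of_norm_le ((hi.indicator hS).const_mul a) (ae_of_all _ fun z => ?_)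
  have hnn : 0 ≤ a * indicator {z : E2 | r ≤ ‖z‖ ∧ ‖z‖ ≤ δ} (fun z => ‖z‖ ^ 2 * γ ‖z‖) z := by
    refine mul_nonneg ha (indicator_nonneg (fun z _ => ?_) z)
    exact mul_nonneg (by positivity) (hγ0 _ (norm_nonneg _))
  rcases le_or_gt ‖z‖ r with h | h
  · rw [hm1 z h]; simpa using hnn
  rcases lt_or_ge ‖z‖ δ with h' | h'
  · rw [indicator_of_mem (show z ∈ {z : E2 | r ≤ ‖z‖ ∧ ‖z‖ ≤ δ} from ⟨h.le, h'.le⟩)]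
    rw [norm_mul, norm_mul, Real.norm_eq_abs, Real.norm_eq_abs, Real.norm_eq_abs,
      abs_of_nonneg (hγ0 _ (norm_nonneg _)), abs_of_nonneg (by linarith [(hm z).2] : 0 ≤ 1 - m z)]
    have h1 := mul_le_mul_of_nonneg_right (hφ z h h') (hγ0 _ (norm_nonneg z))
    have h2 : 0 ≤ |φ z| * γ ‖z‖ := mul_nonneg (abs_nonneg _) (hγ0 _ (norm_nonneg z))
    nlinarith [(hm z).1]
  · rw [h0 _ h']
    simpa using hnn

lemma split_m (γ : ℝ → ℝ) (m : E2 → ℝ) (hmm : Measurable m) (hm : ∀ z, m z ∈ Icc (0 : ℝ) 1)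
    (φ : E2 → ℝ) (hi : Integrable (fun z => φ z * γ ‖z‖)) :
    ∫ z, φ z * (γ ‖z‖ * m z) = (∫ z, φ z * γ ‖z‖) - ∫ z, φ z * γ ‖z‖ * (1 - m z) := by
  rw [← integral_sub hi]
  · congr 1; ext z; ring
  · refine hi.mul_bdd (c := 1) ((measurable_const.sub hmm).aestronglyMeasurable)
      (ae_of_all _ fun z => ?_)
    rw [Real.norm_eq_abs, abs_le]
    constructor <;> linarith [(hm z).1, (hm z).2]

lemma int_multi (γ : ℝ → ℝ) (δ : ℝ) (h0 : ∀ s, δ ≤ s → γ s = 0)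
    (hG : Integrable (fun z : E2 => γ ‖z‖)) (n : ℕ) (b : E2 [×n]→L[ℝ] ℝ) :
    Integrable (fun z : E2 => b (fun _ => z) * γ ‖z‖) := by
  have hb : Continuous fun z : E2 => b (fun _ => z) := b.cont.comp (by fun_prop)
  refine intG γ δ h0 hG _ hb.measurable (‖b‖ * δ ^ n) fun z hz => ?_
  have := b.le_opNorm (fun _ => z)
  simp only [Finset.prod_const, Finset.card_univ, Fintype.card_fin, Real.norm_eq_abs] at this
  exact this.trans (by gcongr)

lemma odd_multi (γ : ℝ → ℝ) (n : ℕ) (hn : Odd n) (b : E2 [×n]→L[ℝ] ℝ) :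
    ∫ z : E2, b (fun _ => z) * γ ‖z‖ = 0 := by
  apply odd_zero
  intro z
  have := b.map_smul_univ (fun _ => (-1:ℝ)) (fun _ => z)
  simpa [hn.neg_one_pow] using this

lemma consistency (γ : ℝ → ℝ) (δ r D M : ℝ) (hγ : RadialKernel 2 δ γ) (hr : 0 < r) (hM : 0 ≤ M)
    (hγ0 : ∀ s, 0 ≤ s → 0 ≤ γ s)
    (hG : Integrable (fun z : E2 => γ ‖z‖))
    (hD : D = (∫ z in {z : E2 | r ≤ ‖z‖ ∧ ‖z‖ ≤ δ}, ‖z‖ ^ 2 * γ ‖z‖))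
    (m : E2 → ℝ) (hmm : Measurable m)
    (hm : ∀ z, m z ∈ Icc (0 : ℝ) 1) (hm1 : ∀ z, ‖z‖ ≤ r → m z = 1)
    (φ : E2 → ℝ) (hφm : Measurable φ) (hφ : ∀ z, ‖z‖ < δ → |φ z| ≤ M * ‖z‖)
    (b1 : E2 [×1]→L[ℝ] ℝ) (b2 : E2 [×2]→L[ℝ] ℝ) (b3 : E2 [×3]→L[ℝ] ℝ)
    (hT : ∀ z, ‖z‖ < δ → |φ z - b1 (fun _ => z) - b2 (fun _ => z) / 2 - b3 (fun _ => z) / 6|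
      ≤ M * ‖z‖ ^ 4) :
    |2 * (∫ z, φ z * (γ ‖z‖ * m z))
      - ∑ i : Fin 2, b2 ![EuclideanSpace.single i 1, EuclideanSpace.single i 1]|
      ≤ 4 * M * δ ^ 2 + 2 * M * D / r := by
  have h0 := hγ.2.2.1
  have hi : Integrable (fun z => φ z * γ ‖z‖) :=
    intG γ δ h0 hG φ hφm (M * δ) fun z hz => (hφ z hz).trans (by gcongr)
  have i1 := int_multi γ δ h0 hG 1 b1
  have i2 := int_multi γ δ h0 hG 2 b2
  have i3 := int_multi γ δ h0 hG 3 b3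
  have o1 := odd_multi γ 1 (by decide) b1
  have o3 := odd_multi γ 3 (by decide) b3
  have e2 := moment_bil γ δ hγ hG b2
  have hrem : ∫ z, (φ z - b1 (fun _ => z) - b2 (fun _ => z) / 2 - b3 (fun _ => z) / 6) * γ ‖z‖
      = (∫ z, φ z * γ ‖z‖)
       - (∑ i : Fin 2, b2 ![EuclideanSpace.single i 1, EuclideanSpace.single i 1]) / 2 := by
    have ee : ∀ z, (φ z - b1 (fun _ => z) - b2 (fun _ => z) / 2 - b3 (fun _ => z) / 6) * γ ‖z‖
      = φ z * γ ‖z‖ - b1 (fun _ => z) * γ ‖z‖ - (b2 (fun _ => z) * γ ‖z‖) / 2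
        - (b3 (fun _ => z) * γ ‖z‖) / 6 := fun z => by ring
    simp_rw [ee]
    have j1 := hi.sub i1
    have j2 := j1.sub (i2.div_const 2)
    simp only [Pi.sub_def] at j1 j2
    rw [integral_sub j2 (i3.div_const 6), integral_sub j1 (i2.div_const 2), integral_sub hi i1,
      integral_div, integral_div, o1, o3, e2]
    ring
  have hsq : Integrable (fun z : E2 => ‖z‖ ^ 2 * γ ‖z‖) :=
    intG γ δ h0 hG _ (by fun_prop) (δ ^ 2) fun z hz => by
      rw [abs_of_nonneg (by positivity)]; gcongr
  have hremb : |∫ z, (φ z - b1 (fun _ => z) - b2 (fun _ => z) / 2 - b3 (fun _ => z) / 6) * γ ‖z‖|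
      ≤ 2 * M * δ ^ 2 := by
    have : ∫ z : E2, M * δ ^ 2 * (‖z‖ ^ 2 * γ ‖z‖) = 2 * M * δ ^ 2 := by
      rw [integral_const_mul, moment2 γ δ hγ]; ring
    rw [← this, ← Real.norm_eq_abs]
    refine norm_integral_le_of_norm_le (hsq.const_mul _) (ae_of_all _ fun z => ?_)
    rw [norm_mul, Real.norm_eq_abs, Real.norm_eq_abs, abs_of_nonneg (hγ0 _ (norm_nonneg _))]
    rcases lt_or_ge ‖z‖ δ with h' | h'
    · rw [← mul_assoc]
      refine mul_le_mul_of_nonneg_right ((hT z h').trans ?_) (hγ0 _ (norm_nonneg _))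
      have : ‖z‖ ^ 2 ≤ δ ^ 2 := by gcongr
      have h3 : 0 ≤ M * ‖z‖ ^ 2 := by positivity
      nlinarith
    · rw [h0 _ h']; simp
  have ht := tail γ δ r D hγ0 h0 hG hD m hm hm1 φ (M / r) (by positivity) (fun z h1 h2 => by
    refine (hφ z h2).trans ?_
    rw [div_mul_eq_mul_div, le_div_iff₀ hr]
    have : 0 ≤ M * ‖z‖ := by positivity
    nlinarith)
  rw [split_m γ m hmm hm φ hi]
  rw [hrem] at hremb
  have e3 : 2 * M * D / r = 2 * (M / r * D) := by ring
  rw [e3]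
  rw [abs_le] at *
  constructor <;> linarith [hremb.1, hremb.2, ht.1, ht.2]

lemma barrier (γ : ℝ → ℝ) (δ r D R : ℝ) (hγ : RadialKernel 2 δ γ) (hr : 0 < r) (hR : 0 ≤ R)
    (hγ0 : ∀ s, 0 ≤ s → 0 ≤ γ s)
    (hG : Integrable (fun z : E2 => γ ‖z‖))
    (hD : D = (∫ z in {z : E2 | r ≤ ‖z‖ ∧ ‖z‖ ≤ δ}, ‖z‖ ^ 2 * γ ‖z‖))
    (hD1 : D ≤ 1 / 2) (hD2 : 4 * R * D / r ≤ 1)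
    (m : E2 → ℝ) (hmm : Measurable m)
    (hm : ∀ z, m z ∈ Icc (0 : ℝ) 1) (hm1 : ∀ z, ‖z‖ ≤ r → m z = 1)
    (p : E2) (hp : ‖p‖ ≤ R) :
    1 ≤ ∫ z, (‖p + z‖ ^ 2 - ‖p‖ ^ 2) * (γ ‖z‖ * m z) := by
  have h0 := hγ.2.2.1
  have e : ∀ z, ‖p + z‖ ^ 2 - ‖p‖ ^ 2 = 2 * inner ℝ p z + ‖z‖ ^ 2 := fun z => by
    rw [norm_add_sq_real]; ring
  simp_rw [e]
  have hin : ∀ z : E2, |2 * inner ℝ p z| ≤ 2 * R * ‖z‖ := fun z => by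
    rw [abs_mul, abs_two, mul_assoc]
    gcongr
    exact (abs_real_inner_le_norm p z).trans (by gcongr)
  have hlin : Integrable (fun z : E2 => (2 * inner ℝ p z) * γ ‖z‖) :=
    intG γ δ h0 hG _ (by fun_prop) (2 * R * δ) fun z hz => (hin z).trans (by gcongr)
  have hsq : Integrable (fun z : E2 => ‖z‖ ^ 2 * γ ‖z‖) :=
    intG γ δ h0 hG _ (by fun_prop) (δ ^ 2) fun z hz => by
      rw [abs_of_nonneg (by positivity)]; gcongr
  have hi : Integrable (fun z : E2 => (2 * inner ℝ p z + ‖z‖ ^ 2) * γ ‖z‖) := by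
    simp_rw [add_mul]
    exact hlin.add hsq
  rw [split_m γ m hmm hm _ hi]
  have h1 : ∫ z : E2, (2 * inner ℝ p z + ‖z‖ ^ 2) * γ ‖z‖ = 2 := by
    simp_rw [add_mul]
    rw [integral_add hlin hsq, moment2 γ δ hγ, odd_zero, zero_add]
    intro z; simp
  have ht := tail γ δ r D hγ0 h0 hG hD m hm hm1 (fun z => 2 * inner ℝ p z + ‖z‖ ^ 2)
    (2 * R / r + 1) (by positivity) (fun z h1 h2 => by
    refine (abs_add_le _ _).trans ?_
    rw [add_mul, one_mul, abs_of_nonneg (by positivity : 0 ≤ ‖z‖ ^ 2)]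
    gcongr
    refine (hin z).trans ?_
    rw [div_mul_eq_mul_div, le_div_iff₀ hr]
    have : 0 ≤ 2 * R * ‖z‖ := by positivity
    nlinarith)
  rw [h1]
  have e3 : (2 * R / r + 1) * D = (4 * R * D / r) / 2 + D := by ring
  rw [e3] at ht
  have := (abs_le.1 ht).2
  linarith

lemma convert_int (Ω : Set E2) (hΩo : IsOpen Ω) (δ : ℝ) (hS : MeasurableSet (hatΩ Ω δ))
    (γ : ℝ → ℝ) (h0 : ∀ s, δ ≤ s → γ s = 0) (x : E2) (hx : x ∈ Ω) (kx : E2 → ℝ) (m : E2 → ℝ)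
    (hk : ∀ᵐ z ∂volume, kx (x + z) = γ ‖z‖ * m z) (F : E2 → ℝ) :
    ∫ y in hatΩ Ω δ, F y * kx y = ∫ z, F (x + z) * (γ ‖z‖ * m z) := by
  rw [← integral_indicator hS, ← integral_add_left_eq_self _ x]
  refine integral_congr_ae ?_
  filter_upwards [hk] with z hz
  by_cases h : x + z ∈ hatΩ Ω δ
  · rw [indicator_of_mem h, hz]
  · rw [indicator_of_notMem h]
    have : δ ≤ ‖z‖ := by
      by_contra hlt
      exact h (ball_sub_hat_s19 Ω hΩo δ x hx z (not_le.1 hlt))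
    rw [h0 _ this]; simp

lemma maxp (S Ω Oc : Set E2) (hSm : MeasurableSet S) (hS : S = Ω ∪ Oc) (w : E2 → ℝ) (Wb η κ c : ℝ)
    (hη : 0 < η) (hκ : 0 < κ)
    (kk : E2 → E2 → ℝ) (hk0 : ∀ x ∈ Ω, ∀ y ∈ S, 0 ≤ kk x y)
    (hki : ∀ x ∈ Ω, IntegrableOn (kk x) S) (hkκ : ∀ x ∈ Ω, ∫ y in S, kk x y ≤ κ)
    (hw : ∀ x ∈ S, w x ≤ Wb)
    (hL : ∀ x ∈ Ω, η ≤ ∫ y in S, (w y - w x) * kk x y) (hc : ∀ x ∈ Oc, w x ≤ c) :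
    ∀ x ∈ S, w x ≤ c := by
  intro x0 hx0
  by_contra hlt
  push Not at hlt
  have hne : (w '' S).Nonempty := ⟨_, mem_image_of_mem w hx0⟩
  have hbd : BddAbove (w '' S) := ⟨Wb, by rintro _ ⟨x, hx, rfl⟩; exact hw x hx⟩
  set s := sSup (w '' S)
  have hs : c < s := hlt.trans_le (le_csSup hbd (mem_image_of_mem w hx0))
  set ε := η / (2 * κ) with hε
  have hεp : 0 < ε := by positivity
  obtain ⟨_, ⟨x, hx, rfl⟩, hxw⟩ := exists_lt_of_lt_csSup hne
    (show max c (s - ε) < s from max_lt hs (by linarith))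
  have hxΩ : x ∈ Ω := by
    rw [hS] at hx
    rcases hx with h | h
    · exact h
    · exact absurd (hc x h) (not_le.2 ((le_max_left _ _).trans_lt hxw))
  have h1 := hL x hxΩ
  have hb : ∫ y in S, (w y - w x) * kk x y ≤ ε * κ := by
    by_cases hi : IntegrableOn (fun y => (w y - w x) * kk x y) S
    · calc ∫ y in S, (w y - w x) * kk x y ≤ ∫ y in S, ε * kk x y := by
            refine setIntegral_mono_on hi ((hki x hxΩ).const_mul ε) hSm fun y hy => ?_
            refine mul_le_mul_of_nonneg_right ?_ (hk0 x hxΩ y hy)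
            have := le_csSup hbd (mem_image_of_mem w hy)
            have h2 := (le_max_right c (s - ε)).trans_lt hxw
            linarith
        _ = ε * ∫ y in S, kk x y := integral_const_mul _ _
        _ ≤ ε * κ := mul_le_mul_of_nonneg_left (hkκ x hxΩ) hεp.le
    · rw [integral_undef hi]; positivity
  have : ε * κ = η / 2 := by rw [hε]; field_simp
  linarith

lemma energy (ν : Measure E2) [IsFiniteMeasure ν] (kk : E2 → E2 → ℝ)
    (hkm : Measurable (Function.uncurry kk)) (hk0 : ∀ x y, 0 ≤ kk x y)
    (hks : ∀ x y, kk x y = kk y x) (κ : ℝ) (hki : ∀ x, Integrable (kk x) ν)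
    (hkκ : ∀ x, ∫ y, kk x y ∂ν ≤ κ) (e : E2 → ℝ) (he : Measurable e) (c : ℝ)
    (hc : ∀ x, |e x| ≤ c) :
    ∫ x, ∫ y, (e y - e x) ^ 2 * kk x y ∂ν ∂ν = ∫ x, -(e x * (2 * ∫ y, (e y - e x) * kk x y ∂ν)) ∂ν
    := by
  have hki2 : Integrable (Function.uncurry kk) (ν.prod ν) := by
    rw [integrable_prod_iff hkm.aestronglyMeasurable]
    refine ⟨ae_of_all _ hki, ?_⟩
    refine Integrable.of_bound (C := κ)
      hkm.norm.stronglyMeasurable.integral_prod_right'.aestronglyMeasurable (ae_of_all _ fun x => ?_)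
    simp only [Function.uncurry_apply_pair, Real.norm_eq_abs, abs_of_nonneg (hk0 _ _)]
    rw [abs_of_nonneg (integral_nonneg (hk0 x))]
    exact hkκ x
  have hbd : ∀ φ : E2 × E2 → ℝ, Measurable φ → ∀ C : ℝ, (∀ p, |φ p| ≤ C) →
      Integrable (fun p => φ p * Function.uncurry kk p) (ν.prod ν) := fun φ hφ C hC =>
    hki2.bdd_mul hφ.aestronglyMeasurable (ae_of_all _ hC)
  have hsub : ∀ x y, |e y - e x| ≤ 2 * c := fun x y => by
    have := abs_sub (e y) (e x); linarith [hc x, hc y]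
  have hc0 : 0 ≤ c := (abs_nonneg _).trans (hc 0)
  have m1 : Measurable fun p : E2 × E2 => e p.1 := he.comp measurable_fst
  have m2 : Measurable fun p : E2 × E2 => e p.2 := he.comp measurable_snd
  have I1 := hbd (fun p => e p.1 * (e p.2 - e p.1)) (m1.mul (m2.sub m1)) (c * (2 * c)) fun p => by
    rw [abs_mul]; exact mul_le_mul (hc _) (hsub _ _) (abs_nonneg _) hc0
  have I2 := hbd (fun p => e p.2 * (e p.2 - e p.1)) (m2.mul (m2.sub m1)) (c * (2 * c)) fun p => by
    rw [abs_mul]; exact mul_le_mul (hc _) (hsub _ _) (abs_nonneg _) hc0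
  have I3 := hbd (fun p => (e p.2 - e p.1) ^ 2) ((m2.sub m1).pow_const 2) ((2 * c) ^ 2) fun p => by
    rw [abs_pow]; exact pow_le_pow_left₀ (abs_nonneg _) (hsub _ _) 2
  have L : ∫ x, ∫ y, (e y - e x) ^ 2 * kk x y ∂ν ∂ν
      = ∫ p, (e p.2 - e p.1) ^ 2 * Function.uncurry kk p ∂(ν.prod ν) := (integral_prod _ I3).symm
  have Rr : ∫ x, -(e x * (2 * ∫ y, (e y - e x) * kk x y ∂ν)) ∂ν
      = -2 * ∫ p, e p.1 * (e p.2 - e p.1) * Function.uncurry kk p ∂(ν.prod ν) := by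
    rw [integral_prod _ I1, ← integral_const_mul]
    congr 1; ext x
    simp only [Function.uncurry_apply_pair, mul_assoc]
    rw [integral_const_mul]; ring
  have sw : ∫ p, e p.2 * (e p.2 - e p.1) * Function.uncurry kk p ∂(ν.prod ν)
      = - ∫ p, e p.1 * (e p.2 - e p.1) * Function.uncurry kk p ∂(ν.prod ν) := by
    rw [← integral_prod_swap, ← integral_neg]
    congr 1; ext p
    simp only [Function.uncurry, Prod.fst_swap, Prod.snd_swap]
    rw [hks p.2 p.1]; ring
  rw [L, Rr]
  have : ∀ p : E2 × E2, (e p.2 - e p.1) ^ 2 * Function.uncurry kk p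
    = e p.2 * (e p.2 - e p.1) * Function.uncurry kk p
      - e p.1 * (e p.2 - e p.1) * Function.uncurry kk p := fun p => by ring
  simp_rw [this]
  rw [integral_sub I2 I1, sw]
  ring

/-- energy-norm error estimate for nonlocal problems with
non-symmetric polygonal interaction neighborhoods. -/
theorem stmt19 (Ω : Set (EuclideanSpace ℝ (Fin 2)))
    (hΩb : Bornology.IsBounded Ω) (hΩo : IsOpen Ω)
    (δ₀ : ℝ) (hδ₀ : δ₀ ∈ Ioc (0 : ℝ) 1) (μ : ℕ) (hμ : μ = 0 ∨ μ = 1)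
    (A B M R K K' : ℝ) (hA : 0 < A) (hB : 0 < B) (hM : 0 < M) (hR : 0 < R)
    (hK : 0 < K) (hK' : 0 < K')
    (xstar : EuclideanSpace ℝ (Fin 2)) (hcont : hatΩ Ω δ₀ ⊆ closedBall xstar R) :
    ∃ C > 0, ∀ δ ∈ Ioc (0 : ℝ) δ₀, ∀ r ∈ Icc (δ / 2) δ,
      ∀ γ : ℝ → ℝ, RadialKernel 2 δ γ →
      IntegrableOn (fun z : EuclideanSpace ℝ (Fin 2) => γ ‖z‖) (ball 0 δ) →
      (∫ z in ball (0 : EuclideanSpace ℝ (Fin 2)) δ, γ ‖z‖) ≤ K / δ ^ 2 →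
      volume (omegaC Ω δ) ≤ ENNReal.ofReal (K' * δ) →
      ∀ D : ℝ,
        D = (∫ z in {z : EuclideanSpace ℝ (Fin 2) | r ≤ ‖z‖ ∧ ‖z‖ ≤ δ},
          ‖z‖ ^ 2 * γ ‖z‖) →
        D ≤ 1 / 2 → 4 * R * D / r ≤ 1 →
      ∀ k : EuclideanSpace ℝ (Fin 2) → EuclideanSpace ℝ (Fin 2) → ℝ,
        Measurable (Function.uncurry k) →
        (∀ x ∈ hatΩ Ω δ, ∀ y ∈ hatΩ Ω δ, 0 ≤ k x y) →
        (∀ x ∈ hatΩ Ω δ, ∀ y ∈ hatΩ Ω δ, k x y = k y x) →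
        (∀ x ∈ hatΩ Ω δ, ∀ y ∈ hatΩ Ω δ, k x y ≤ γ ‖y - x‖) →
        (∀ x ∈ Ω, ∃ m : EuclideanSpace ℝ (Fin 2) → ℝ, Measurable m ∧
          (∀ z, m z ∈ Icc (0 : ℝ) 1) ∧
          (∀ z, ‖z‖ ≤ r → m z = 1) ∧ (∀ z, δ ≤ ‖z‖ → m z = 0) ∧
          (∀ᵐ z ∂volume, k x (x + z) = γ ‖z‖ * m z)) →
      ∀ u₀ : EuclideanSpace ℝ (Fin 2) → ℝ,
        (∃ V, IsOpen V ∧ closure (hatΩ Ω δ) ⊆ V ∧ ContDiffOn ℝ 4 u₀ V) →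
        (∀ y ∈ hatΩ Ω δ, ∀ j ≤ 4, ‖iteratedFDeriv ℝ j u₀ y‖ ≤ M) →
      ∀ f : EuclideanSpace ℝ (Fin 2) → ℝ,
        (∀ x ∈ Ω, |f x - (-(lap 2 u₀ x))| ≤ A * δ ^ 2) →
      ∀ g : EuclideanSpace ℝ (Fin 2) → ℝ,
        (∀ x ∈ omegaC Ω δ, |g x - u₀ x| ≤ B * δ ^ (2 + μ)) →
      ∀ u : EuclideanSpace ℝ (Fin 2) → ℝ, Measurable u →
        (∃ Mu : ℝ, ∀ x ∈ hatΩ Ω δ, |u x| ≤ Mu) →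
        (∀ x ∈ Ω, -(2 * ∫ y in hatΩ Ω δ, (u y - u x) * k x y) = f x) →
        (∀ x ∈ omegaC Ω δ, u x = g x) →
      (∫ x in hatΩ Ω δ, ∫ y in hatΩ Ω δ,
          ((u y - u₀ y) - (u x - u₀ x)) ^ 2 * k x y) ≤
        C * (δ ^ (1 + μ) + δ⁻¹ * D) * (δ ^ 2 + δ⁻¹ * D) := by
    classical
  obtain ⟨hδ₀p, hδ₀1⟩ := hδ₀
  set vol := (volume : Measure (EuclideanSpace ℝ (Fin 2))).real (closedBall xstar R) with hvol
  have hvol0 : 0 ≤ vol := measureReal_nonneg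
  refine ⟨(B + (A + 4 * M) * R ^ 2) * (vol * (A + 4 * M) + 4 * B * K * K'), by positivity, ?_⟩
  rintro δ ⟨hδ, hδδ₀⟩ r ⟨hr1, hr2⟩ γ hγ hint hK1 hOc D hD hD1 hD2 k hkm hk0 hks hkγ hkm' u₀
    ⟨V, hVo, hVS, hu₀V⟩ hu₀M f hf g hg u hum ⟨Mu, hMu⟩ hLu hug
  have hr : 0 < r := by linarith
  have hδ1 : δ ≤ 1 := hδδ₀.trans hδ₀1
  have h0 := hγ.2.2.1
  have hOm : MeasurableSet (omegaC Ω δ) :=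
    hΩo.measurableSet.compl.inter (measurableSet_lt measurable_infDist measurable_const)
  have hSm : MeasurableSet (hatΩ Ω δ) := hΩo.measurableSet.union hOm
  have hSR : hatΩ Ω δ ⊆ closedBall xstar R := by
    refine Subset.trans ?_ hcont
    rintro y (hy | hy)
    · exact Or.inl hy
    · exact Or.inr ⟨hy.1, hy.2.trans_le hδδ₀⟩
  set S := hatΩ Ω δ with hSdef
  have hΩS : ∀ x ∈ Ω, x ∈ S := fun x hx => Or.inl hx
  have hOS : ∀ x ∈ omegaC Ω δ, x ∈ S := fun x hx => Or.inr hx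
  have hSne : S.Nonempty := by
    by_cases hΩ : Ω.Nonempty
    · obtain ⟨x, hx⟩ := hΩ; exact ⟨x, hΩS x hx⟩
    · rw [not_nonempty_iff_eq_empty] at hΩ
      refine ⟨0, Or.inr ⟨by simp [hΩ], by simpa [hΩ] using hδ⟩⟩
  have hγ0 : ∀ s, 0 ≤ s → 0 ≤ γ s := by
    intro s hs
    rcases hs.eq_or_lt with rfl | hs
    · obtain ⟨x, hx⟩ := hSne
      have := (hk0 x hx x hx).trans (hkγ x hx x hx)
      simpa using this
    · rcases lt_or_ge s δ with h | h
      · exact (hγ.2.1 s hs h).le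
      · exact (h0 s h).ge
  have hG := integrableG γ δ h0 hint
  have hGK : ∫ z : EuclideanSpace ℝ (Fin 2), γ ‖z‖ ≤ K / δ ^ 2 := by
    rw [← setIntegral_eq_integral_of_forall_compl_eq_zero (s := ball 0 δ)]
    · exact hK1
    · intro z hz
      exact h0 _ (by simpa using hz)
  set κ := K / δ ^ 2 with hκ
  have hκp : 0 < κ := by positivity
  have hD0 : 0 ≤ D := by
    rw [hD]
    exact integral_nonneg fun z => mul_nonneg (by positivity) (hγ0 _ (norm_nonneg _))
  -- the truncated kernel
  set kk : EuclideanSpace ℝ (Fin 2) → EuclideanSpace ℝ (Fin 2) → ℝ :=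
    fun x y => (S ×ˢ S).indicator (Function.uncurry k) (x, y) with hkkdef
  have hkk : ∀ x ∈ S, ∀ y ∈ S, kk x y = k x y := fun x hx y hy => by
    simp only [hkkdef]; rw [indicator_of_mem (mk_mem_prod hx hy)]; rfl
  have hkkn : ∀ x y, ¬ (x ∈ S ∧ y ∈ S) → kk x y = 0 := fun x y h => by
    simp only [hkkdef]; rw [indicator_of_notMem]; simpa using h
  have hkkm : Measurable (Function.uncurry kk) := by
    have : Function.uncurry kk = (S ×ˢ S).indicator (Function.uncurry k) := by
      ext ⟨x, y⟩; rfl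
    rw [this]; exact hkm.indicator (hSm.prod hSm)
  have hkk0 : ∀ x y, 0 ≤ kk x y := fun x y => by
    by_cases h : x ∈ S ∧ y ∈ S
    · rw [hkk x h.1 y h.2]; exact hk0 x h.1 y h.2
    · rw [hkkn x y h]
  have hkks : ∀ x y, kk x y = kk y x := fun x y => by
    by_cases h : x ∈ S ∧ y ∈ S
    · rw [hkk x h.1 y h.2, hkk y h.2 x h.1]; exact hks x h.1 y h.2
    · rw [hkkn x y h, hkkn y x (fun h' => h ⟨h'.2, h'.1⟩)]
  have hkkγ : ∀ x y, kk x y ≤ γ ‖y - x‖ := fun x y => by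
    by_cases h : x ∈ S ∧ y ∈ S
    · rw [hkk x h.1 y h.2]; exact hkγ x h.1 y h.2
    · rw [hkkn x y h]; exact hγ0 _ (norm_nonneg _)
  have hGx : ∀ x, Integrable (fun y : EuclideanSpace ℝ (Fin 2) => γ ‖y - x‖) := fun x =>
    hG.comp_sub_right x
  have hkkx : ∀ x, Measurable (kk x) := fun x => hkkm.comp measurable_prodMk_left
  have hkkI : ∀ x, Integrable (kk x) := fun x =>
    (hGx x).mono' (hkkx x).aestronglyMeasurable (ae_of_all _ fun y => by
      rw [Real.norm_eq_abs, abs_of_nonneg (hkk0 x y)]; exact hkkγ x y)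
  have hkkκ : ∀ x, ∫ y in S, kk x y ≤ κ := fun x => by
    calc ∫ y in S, kk x y ≤ ∫ y, kk x y :=
          setIntegral_le_integral (hkkI x) (ae_of_all _ (hkk0 x))
      _ ≤ ∫ y, γ ‖y - x‖ := integral_mono (hkkI x) (hGx x) (hkkγ x)
      _ = ∫ y : EuclideanSpace ℝ (Fin 2), γ ‖y‖ :=
          integral_sub_right_eq_self (fun y : EuclideanSpace ℝ (Fin 2) => γ ‖y‖) x
      _ ≤ κ := hGK
  have hIb : ∀ (φ : EuclideanSpace ℝ (Fin 2) → ℝ), Measurable φ → ∀ C : ℝ,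
      (∀ y ∈ S, |φ y| ≤ C) → ∀ x, IntegrableOn (fun y => φ y * kk x y) S := by
    intro φ hφ C hC x
    refine (hkkI x).integrableOn.bdd_mul hφ.aestronglyMeasurable (c := C) ?_
    rw [ae_restrict_iff' hSm]
    exact ae_of_all _ hC
  -- the truncated functions
  set v := S.indicator u₀ with hv
  have hSV : S ⊆ V := subset_closure.trans hVS
  have hvm : Measurable v := by
    rw [hv, ← piecewise_eq_indicator]
    exact (hu₀V.continuousOn.mono hSV).measurable_piecewise continuousOn_const hSm
  have hvS : ∀ x ∈ S, v x = u₀ x := fun x hx => indicator_of_mem hx _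
  have hvb : ∀ x ∈ S, |v x| ≤ M := fun x hx => by
    rw [hvS x hx]
    have := hu₀M x hx 0 (by norm_num)
    rwa [norm_iteratedFDeriv_zero] at this
  set e := S.indicator (fun x => u x - v x) with he
  have hem : Measurable e := (hum.sub hvm).indicator hSm
  have heS : ∀ x ∈ S, e x = u x - v x := fun x hx => indicator_of_mem hx _
  have heb : ∀ x, |e x| ≤ |Mu| + M := fun x => by
    by_cases hx : x ∈ S
    · rw [heS x hx]
      have := abs_sub (u x) (v x)
      linarith [hMu x hx, hvb x hx, le_abs_self Mu]
    · rw [he, indicator_of_notMem hx]; simp; positivity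
  set s := δ ^ 2 + δ⁻¹ * D with hs
  have hsp : 0 < s := by positivity
  set T := (A + 4 * M) * s with hT
  have hTp : 0 < T := by positivity
  have kcongr : ∀ x ∈ S, ∀ F : EuclideanSpace ℝ (Fin 2) → ℝ,
      ∫ y in S, F y * kk x y = ∫ y in S, F y * k x y := fun x hx F =>
    setIntegral_congr_fun hSm fun y hy => by simp only [hkk x hx y hy]
  -- consistency
  have hLe : ∀ x ∈ Ω, |2 * ∫ y in S, (e y - e x) * kk x y| ≤ T := by
    intro x hx
    obtain ⟨m, hmm, hm, hm1, _, hmk⟩ := hkm' x hx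
    have hseg : ∀ z, ‖z‖ < δ → ∀ t ∈ Icc (0:ℝ) 1, x + t • z ∈ S := fun z hz t ht => by
      refine ball_sub_hat_s19 Ω hΩo δ x hx _ ?_
      rw [norm_smul, Real.norm_eq_abs, abs_of_nonneg ht.1]
      nlinarith [ht.2, norm_nonneg z]
    have h1 := consistency γ δ r D M hγ hr hM.le hγ0 hG hD m hmm hm hm1
      (fun z => v (x + z) - v x) ((hvm.comp (measurable_const_add x)).sub_const _)
      (fun z hz => by
        have hxz := hseg z hz 1 (by simp)
        rw [one_smul] at hxz
        rw [hvS _ hxz, hvS x (hΩS x hx)]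
        exact lipE u₀ V hVo hu₀V x z M (fun t ht => hSV (hseg z hz t ht))
          (fun t ht => hu₀M _ (hseg z hz t ht) 1 (by norm_num)))
      (iteratedFDeriv ℝ 1 u₀ x) (iteratedFDeriv ℝ 2 u₀ x) (iteratedFDeriv ℝ 3 u₀ x)
      (fun z hz => by
        have hxz := hseg z hz 1 (by simp)
        rw [one_smul] at hxz
        rw [hvS _ hxz, hvS x (hΩS x hx)]
        exact taylorE u₀ V hVo hu₀V x z M (fun t ht => hSV (hseg z hz t ht))
          (fun t ht => hu₀M _ (hseg z hz t ht) 4 (by norm_num)))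
    rw [← convert_int Ω hΩo δ hSm γ h0 x hx (k x) m hmk (fun y => v y - v x), ← hSdef,
      ← kcongr x (hΩS x hx)] at h1
    have h2 := hLu x hx
    rw [← kcongr x (hΩS x hx)] at h2
    have h3 := hf x hx
    unfold lap at h3
    have iu := hIb (fun y => u y - u x) (hum.sub_const _) (2 * Mu) (fun y hy => by
      have := abs_sub (u y) (u x)
      linarith [hMu x (hΩS x hx), hMu y hy]) x
    have iv := hIb (fun y => v y - v x) (hvm.sub_const _) (2 * M) (fun y hy => by
      have := abs_sub (v y) (v x)
      linarith [hvb x (hΩS x hx), hvb y hy]) x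
    have h4 : ∫ y in S, (e y - e x) * kk x y
        = (∫ y in S, (u y - u x) * kk x y) - ∫ y in S, (v y - v x) * kk x y := by
      rw [← integral_sub iu iv]
      refine setIntegral_congr_fun hSm fun y hy => ?_
      simp only [heS y hy, heS x (hΩS x hx)]; ring
    have h5 : 2 * M * D / r ≤ 4 * M * (δ⁻¹ * D) := by
      rw [div_le_iff₀ hr]
      have : 1 / 2 ≤ δ⁻¹ * r := by
        rw [inv_mul_eq_div, le_div_iff₀ hδ]; linarith
      have h6 : 0 ≤ M * D := by positivity
      nlinarith
    have h7 : 0 ≤ A * (δ⁻¹ * D) := by positivity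
    have h8 : T = A * δ ^ 2 + 4 * M * δ ^ 2 + A * (δ⁻¹ * D) + 4 * M * (δ⁻¹ * D) := by
      rw [hT, hs]; ring
    rw [h4]
    rw [abs_le] at *
    constructor <;> linarith [h1.1, h1.2, h3.1, h3.2]
  -- barrier
  have hSR' : ∀ x ∈ S, ‖x - xstar‖ ≤ R := fun x hx => by
    have := hSR hx; rwa [mem_closedBall, dist_eq_norm] at this
  set q : EuclideanSpace ℝ (Fin 2) → ℝ := fun y => ‖y - xstar‖ ^ 2 with hq
  have hqm : Measurable q := by simp only [hq]; fun_prop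
  have hqb : ∀ x ∈ S, |q x| ≤ R ^ 2 := fun x hx => by
    simp only [hq]; rw [abs_of_nonneg (by positivity)]
    exact pow_le_pow_left₀ (norm_nonneg _) (hSR' x hx) 2
  have hq0 : ∀ x, 0 ≤ q x := fun x => by simp only [hq]; positivity
  have hLq : ∀ x ∈ Ω, 1 ≤ ∫ y in S, (q y - q x) * kk x y := by
    intro x hx
    obtain ⟨m, hmm, hm, hm1, _, hmk⟩ := hkm' x hx
    rw [kcongr x (hΩS x hx),
      convert_int Ω hΩo δ hSm γ h0 x hx (k x) m hmk (fun y => q y - q x)]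
    have := barrier γ δ r D R hγ hr hR.le hγ0 hG hD hD1 hD2 m hmm hm hm1 (x - xstar)
      (hSR' x (hΩS x hx))
    convert! this using 4 with z
    simp only [hq]
    congr 3; abel
  set b := B * δ ^ (2 + μ) with hb
  have hbp : 0 < b := by positivity
  have heO : ∀ x ∈ omegaC Ω δ, |e x| ≤ b := fun x hx => by
    rw [heS x (hOS x hx), hvS x (hOS x hx), hug x hx]; exact hg x hx
  set Eb := b + T * R ^ 2 with hEb
  have hEbp : 0 < Eb := by positivity
  have hsup1 : ∀ σ : ℝ, |σ| = 1 → ∀ x ∈ S, σ * e x ≤ Eb := by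
    intro σ hσ
    have habs : ∀ t : ℝ, σ * t ≤ |t| := fun t => by
      have := le_abs_self (σ * t); rwa [abs_mul, hσ, one_mul] at this
    have := maxp S Ω (omegaC Ω δ) hSm rfl (fun x => σ * e x + T * q x)
      (|Mu| + M + T * R ^ 2) (T / 2) κ Eb (by positivity) hκp kk (fun x _ y _ => hkk0 x y)
      (fun x _ => (hkkI x).integrableOn) (fun x _ => hkkκ x)
      (fun x hx => by
        have h1 := (habs (e x)).trans (heb x)
        have h2 := mul_le_mul_of_nonneg_left ((le_abs_self _).trans (hqb x hx)) hTp.le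
        linarith)
      (fun x hx => by
        have i1 := hIb (fun y => e y - e x) (hem.sub_const _) (2 * (|Mu| + M)) (fun y hy => by
          have := abs_sub (e y) (e x)
          linarith [heb x, heb y]) x
        have i2 := hIb (fun y => q y - q x) (hqm.sub_const _) (2 * R ^ 2) (fun y hy => by
          have := abs_sub (q y) (q x)
          linarith [hqb x (hΩS x hx), hqb y hy]) x
        have h4 : ∫ y in S, (σ * e y + T * q y - (σ * e x + T * q x)) * kk x y
          = σ * (∫ y in S, (e y - e x) * kk x y) + T * ∫ y in S, (q y - q x) * kk x y := by
          rw [← integral_const_mul, ← integral_const_mul,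
            ← integral_add (i1.const_mul σ) (i2.const_mul T)]
          congr 1; ext y; ring
        simp only [h4]
        have h5 := hLe x hx
        rw [abs_mul, abs_two] at h5
        have h6 := habs (-(∫ y in S, (e y - e x) * kk x y))
        rw [abs_neg] at h6
        have h7 := mul_le_mul_of_nonneg_left (hLq x hx) hTp.le
        linarith)
      (fun x hx => by
        have h1 := (habs (e x)).trans (heO x hx)
        have h2 := mul_le_mul_of_nonneg_left ((le_abs_self _).trans (hqb x (hOS x hx))) hTp.le
        simp only [hEb]
        linarith)
    intro x hx
    have h1 := this x hx
    have h2 := mul_nonneg hTp.le (hq0 x)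
    linarith
  have hsup : ∀ x ∈ S, |e x| ≤ Eb := fun x hx => by
    have h1 := hsup1 1 (by simp) x hx
    have h2 := hsup1 (-1) (by simp) x hx
    rw [abs_le]; constructor <;> linarith
  -- energy
  have hvolS : volume S ≤ volume (closedBall xstar R) := measure_mono hSR
  have hfin : volume S < ⊤ := hvolS.trans_lt measure_closedBall_lt_top
  have : IsFiniteMeasure ((volume : Measure (EuclideanSpace ℝ (Fin 2))).restrict S) :=
    ⟨by rw [Measure.restrict_apply_univ]; exact hfin⟩
  have hen := energy (volume.restrict S) kk hkkm hkk0 hkks κ (fun x => (hkkI x).restrict) hkkκ e hem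
    (|Mu| + M) heb
  have hlhs : (∫ x in S, ∫ y in S, ((u y - u₀ y) - (u x - u₀ x)) ^ 2 * k x y)
      = ∫ x in S, ∫ y in S, (e y - e x) ^ 2 * kk x y := by
    refine setIntegral_congr_fun hSm fun x hx => setIntegral_congr_fun hSm fun y hy => ?_
    simp only [heS x hx, heS y hy, hvS x hx, hvS y hy, hkk x hx y hy]
  rw [hlhs, hen]
  set gg : EuclideanSpace ℝ (Fin 2) → ℝ := fun x => Ω.indicator (fun _ => Eb * T) x
    + (omegaC Ω δ).indicator (fun _ => b * (4 * Eb * κ)) x with hgg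
  have j1 : IntegrableOn (Ω.indicator (fun _ => Eb * T)) S :=
    (integrable_const _).indicator hΩo.measurableSet
  have j2 : IntegrableOn ((omegaC Ω δ).indicator (fun _ => b * (4 * Eb * κ))) S :=
    (integrable_const _).indicator hOm
  have hbound : (∫ x in S, -(e x * (2 * ∫ y in S, (e y - e x) * kk x y))) ≤ ∫ x in S, gg x := by
    refine (le_abs_self _).trans ?_
    rw [← Real.norm_eq_abs]
    refine norm_integral_le_of_norm_le (j1.add j2) ?_
    rw [ae_restrict_iff' hSm]
    refine ae_of_all _ fun x hx => ?_
    rw [norm_neg, norm_mul, Real.norm_eq_abs, Real.norm_eq_abs]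
    simp only [hgg]
    rcases hx with hx' | hx'
    · have hn : x ∉ omegaC Ω δ := fun h => h.1 hx'
      rw [indicator_of_mem hx', indicator_of_notMem hn, add_zero]
      exact mul_le_mul (hsup x (hΩS x hx')) (hLe x hx') (abs_nonneg _) hEbp.le
    · rw [indicator_of_mem hx', indicator_of_notMem hx'.1, zero_add]
      refine mul_le_mul (heO x hx') ?_ (abs_nonneg _) hbp.le
      rw [abs_mul, abs_two]
      have : |∫ y in S, (e y - e x) * kk x y| ≤ ∫ y in S, (2 * Eb) * kk x y := by
        rw [← Real.norm_eq_abs]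
        refine norm_integral_le_of_norm_le ((hkkI x).integrableOn.const_mul _) ?_
        rw [ae_restrict_iff' hSm]
        refine ae_of_all _ fun y hy => ?_
        rw [norm_mul, Real.norm_eq_abs, Real.norm_eq_abs, abs_of_nonneg (hkk0 x y)]
        refine mul_le_mul_of_nonneg_right ?_ (hkk0 x y)
        have := abs_sub (e y) (e x)
        linarith [hsup y hy, hsup x (hOS x hx')]
      rw [integral_const_mul] at this
      have h2 := mul_le_mul_of_nonneg_left (hkkκ x) (by positivity : 0 ≤ 2 * Eb)
      linarith
  refine hbound.trans ?_
  have hgi : ∫ x in S, gg x = (volume.restrict S).real Ω * (Eb * T)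
      + (volume.restrict S).real (omegaC Ω δ) * (b * (4 * Eb * κ)) := by
    simp only [hgg]
    rw [integral_add j1 j2, integral_indicator_const _ hΩo.measurableSet,
      integral_indicator_const _ hOm, smul_eq_mul, smul_eq_mul]
  rw [hgi]
  have hv1 : (volume.restrict S).real Ω ≤ vol := by
    rw [hvol]
    refine ENNReal.toReal_mono measure_closedBall_lt_top.ne ?_
    refine (measure_mono (subset_univ _)).trans ?_
    rw [Measure.restrict_apply_univ]; exact hvolS
  have hv2 : (volume.restrict S).real (omegaC Ω δ) ≤ K' * δ := by
    refine ENNReal.toReal_le_of_le_ofReal (by positivity) ?_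
    exact (Measure.restrict_apply_le _ _).trans hOc
  set p := δ ^ (1 + μ) + δ⁻¹ * D with hp
  have hδp : δ ^ (1 + μ) ≤ p := by
    have : 0 ≤ δ⁻¹ * D := by positivity
    linarith
  have hsle : s ≤ p := by
    have : δ ^ 2 ≤ δ ^ (1 + μ) := pow_le_pow_of_le_one hδ.le hδ1 (by omega)
    linarith
  have hEs : Eb ≤ (B + (A + 4 * M) * R ^ 2) * s := by
    have h1 : δ ^ (2 + μ) ≤ s := by
      have h2 : δ ^ (2 + μ) ≤ δ ^ 2 := pow_le_pow_of_le_one hδ.le hδ1 (by omega)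
      have : 0 ≤ δ⁻¹ * D := by positivity
      linarith
    have h3 := mul_le_mul_of_nonneg_left h1 hB.le
    simp only [hEb, hb, hT]
    linarith
  calc (volume.restrict S).real Ω * (Eb * T)
      + (volume.restrict S).real (omegaC Ω δ) * (b * (4 * Eb * κ))
      ≤ vol * (Eb * T) + K' * δ * (b * (4 * Eb * κ)) := by gcongr
    _ = Eb * (vol * (A + 4 * M) * s + 4 * B * K * K' * δ ^ (1 + μ)) := by
        simp only [hT, hb, hκ]
        field_simp
        ring
    _ ≤ ((B + (A + 4 * M) * R ^ 2) * s) * (vol * (A + 4 * M) * p + 4 * B * K * K' * p) := by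
        gcongr
    _ = _ := by ring
end
end
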